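/- arXiv:1810.08664 — 6 statements merged into one kernel-verified Lean document; each statement's English description precedes it below -/
import Mathlib

section
/- Let C_n(ℓ;a) be a circulant graph with symmetric edge lengths ℓ_1,…,ℓ_d > 0, let k ∈ ℝ satisfy sin(kℓ_h) ≠ 0 for all h, let v be the symbol of the circulant matrix M(k) (so M(k)_{ij} = v(i−j)), and let ω = exp(2πi/n). Then for every integer j with 0 ≤ j ≤ ⌊n/2⌋, the eigenvalue ∑_{m=0}^{n−1} v(m) ω^{jm} equals p_j(k); explicitly: it equals 2∑_{h=1}^d tan(kℓ_h/2) when j = 0; it equals 2∑_{h=1}^d [−cot(kℓ_h) + cos(2πja_h/n)·csc(kℓ_h)] when 1 ≤ j ≤ ⌊(n−1)/2⌋; and, when n is even and j = n/2, it equals 2[∑_{h: a_h even} tan(kℓ_h/2) − ∑_{h: a_h odd} cot(kℓ_h/2)]. -/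
open Finset

/-- The secular matrix `M(k)` of the quantum circulant graph `C_n(ℓ; a)` with
symmetric edge lengths. -/
noncomputable def Mmat (n d : ℕ) (a : Fin d → ℕ) (ℓ : Fin d → ℝ) (k : ℝ) :
    Matrix (ZMod n) (ZMod n) ℝ :=
  fun i j =>
    if i = j then -2 * ∑ h : Fin d, Real.cos (k * ℓ h) / Real.sin (k * ℓ h)
    else ∑ h : Fin d,
      if i - j = (a h : ZMod n) ∨ i - j = -(a h : ZMod n)
        then 1 / Real.sin (k * ℓ h) else 0

/-! The symbol of `M(k)` is a point mass at `0` plus, for every jump `a_h`, equal point masses at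
`a_h` and `-a_h`. Summing against the character `m ↦ ω^{jm}` turns each such pair into
`2 cos(2πj a_h / n)`. This cosine is `1` for `j = 0` and `(-1)^{a_h}` for `j = n/2`, where the
half-angle formulas `csc x - cot x = tan (x/2)` and `csc x + cot x = cot (x/2)` apply. -/

section CayleySymbol

variable {G ι : Type*} [AddCommGroup G] [DecidableEq G] [Fintype ι]

/-- The symbol of a weighted Cayley graph on `G` with real weights: diagonal weight `c`, and weight
`w h` on both steps `b h` and `-b h`. Coinciding steps are counted with multiplicity, so
`b h = -b h` contributes `2 * w h`. -/
def cayleySymbol (c : ℝ) (b : ι → G) (w : ι → ℝ) : G → ℝ :=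
  Pi.single 0 c + ∑ h, (Pi.single (b h) (w h) + Pi.single (-b h) (w h))

lemma cayleySymbol_apply (c : ℝ) {b : ι → G} (hb : ∀ h, b h ≠ -b h) (w : ι → ℝ) (x : G) :
    cayleySymbol c b w x =
      if x = 0 then c else ∑ h, if x = b h ∨ x = -b h then w h else 0 := by
  have hb₀ (h : ι) : b h ≠ 0 := fun h₀ ↦ hb h (by simp [h₀])
  have pair (h : ι) : (Pi.single (b h) (w h) + Pi.single (-b h) (w h) : G → ℝ) x =
      if x = b h ∨ x = -b h then w h else 0 := by
    by_cases hx : x = b h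
    · simp [hx, hb h]
    · simp [Pi.single_apply, hx]
  simp only [cayleySymbol, Pi.add_apply, Finset.sum_apply, pair]
  by_cases hx : x = 0
  · simp [hx, hb₀, (hb₀ _).symm]
  · simp [hx]

lemma sum_cayleySymbol_mul_addChar [Fintype G] (c : ℝ) (b : ι → G) (w : ι → ℝ)
    (χ : AddChar G ℂ) :
    ∑ x, (cayleySymbol c b w x : ℂ) * χ x = ((c + 2 * ∑ h, (χ (b h)).re * w h : ℝ) : ℂ) := by
  have sum_single (y : G) (r : ℝ) : ∑ x, ((Pi.single y r : G → ℝ) x : ℂ) * χ x = r * χ y := by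
    simp [Pi.single_apply, apply_ite]
  have pair (h : ι) : χ (b h) + χ (-b h) = 2 * ((χ (b h)).re : ℂ) := by
    rw [AddChar.map_neg_eq_conj, Complex.add_conj]
    norm_cast
  calc ∑ x, (cayleySymbol c b w x : ℂ) * χ x
      = c + ∑ h, w h * (χ (b h) + χ (-b h)) := by
        simp only [cayleySymbol, Pi.add_apply, Finset.sum_apply, Complex.ofReal_add,
          Complex.ofReal_sum, add_mul, sum_mul, sum_add_distrib, mul_add]
        rw [sum_comm, sum_comm (s := univ (α := G))]
        simp only [sum_single, AddChar.map_zero_eq_one, mul_one]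
    _ = ((c + 2 * ∑ h, (χ (b h)).re * w h : ℝ) : ℂ) := by
        simp only [pair]
        push_cast
        simp only [mul_sum, mul_left_comm, mul_comm]

end CayleySymbol

section ZMod

variable (n : ℕ) [NeZero n]

lemma sum_range_natCast_zmod {M : Type*} [AddCommMonoid M] (f : ZMod n → M) :
    ∑ m ∈ range n, f m = ∑ x, f x :=
  sum_nbij' (fun m ↦ (m : ZMod n)) ZMod.val (fun _ _ ↦ mem_univ _)
    (fun x _ ↦ mem_range.2 x.val_lt) (fun _ hm ↦ ZMod.val_cast_of_lt (mem_range.1 hm))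
    (fun x _ ↦ ZMod.natCast_zmod_val x) (fun _ _ ↦ rfl)

lemma exp_two_pi_mul_I_div_pow_eq_stdAddChar (m : ℕ) :
    Complex.exp (2 * (Real.pi : ℂ) * Complex.I / n) ^ m = ZMod.stdAddChar (m : ZMod n) := by
  rw [← Int.cast_natCast m, ZMod.stdAddChar_coe, ← Complex.exp_nat_mul]
  push_cast
  ring_nf

lemma re_stdAddChar_natCast (m : ℕ) :
    (ZMod.stdAddChar (m : ZMod n)).re = Real.cos (2 * Real.pi * m / n) := by
  rw [← Int.cast_natCast m, ZMod.stdAddChar_coe, ← Complex.exp_ofReal_mul_I_re]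
  push_cast
  ring_nf

end ZMod

section Trigonometry

variable {x : ℝ}

lemma one_sub_cos_div_sin_eq_tan_half (hx : Real.sin x ≠ 0) :
    (1 - Real.cos x) / Real.sin x = Real.tan (x / 2) := by
  obtain ⟨y, rfl⟩ : ∃ y, x = 2 * y := ⟨x / 2, by ring⟩
  rw [Real.sin_two_mul] at hx ⊢
  obtain ⟨hs, hc⟩ : Real.sin y ≠ 0 ∧ Real.cos y ≠ 0 := by simpa using hx
  rw [mul_div_cancel_left₀ y two_ne_zero, Real.tan_eq_sin_div_cos, Real.cos_two_mul']
  field_simp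
  linear_combination -Real.sin_sq_add_cos_sq y

lemma one_add_cos_div_sin_eq_cot_half (hx : Real.sin x ≠ 0) :
    (1 + Real.cos x) / Real.sin x = Real.cos (x / 2) / Real.sin (x / 2) := by
  obtain ⟨y, rfl⟩ : ∃ y, x = 2 * y := ⟨x / 2, by ring⟩
  rw [Real.sin_two_mul] at hx ⊢
  obtain ⟨hs, hc⟩ : Real.sin y ≠ 0 ∧ Real.cos y ≠ 0 := by simpa using hx
  rw [mul_div_cancel_left₀ y two_ne_zero, Real.cos_two_mul]
  field_simp
  ring

lemma neg_cot_add_neg_one_pow_mul_csc (hx : Real.sin x ≠ 0) (m : ℕ) :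
    -(Real.cos x / Real.sin x) + (-1) ^ m * (1 / Real.sin x) =
      (if Even m then Real.tan (x / 2) else 0) -
        if Odd m then Real.cos (x / 2) / Real.sin (x / 2) else 0 := by
  rcases m.even_or_odd with hm | hm
  · simp only [hm, hm.neg_one_pow, Nat.not_odd_iff_even.2 hm, if_true, if_false,
      ← one_sub_cos_div_sin_eq_tan_half hx]
    ring
  · simp only [hm, hm.neg_one_pow, Nat.not_even_iff_odd.2 hm, if_true, if_false,
      ← one_add_cos_div_sin_eq_cot_half hx]
    ring

end Trigonometry

section SecularMatrix

variable {n d : ℕ} {a : Fin d → ℕ}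

variable (n a) in
/-- The symbol of the secular matrix `M(k)`, written as the symbol of a weighted Cayley graph on
`ZMod n` so that its character sums can be read off. -/
noncomputable def secularSymbol (ℓ : Fin d → ℝ) (k : ℝ) : ZMod n → ℝ :=
  cayleySymbol (-2 * ∑ h, Real.cos (k * ℓ h) / Real.sin (k * ℓ h)) (fun h ↦ (a h : ZMod n))
    fun h ↦ 1 / Real.sin (k * ℓ h)

lemma Mmat_eq_circulant (ha : ∀ h, ¬n ∣ 2 * a h) (ℓ : Fin d → ℝ) (k : ℝ) :
    Mmat n d a ℓ k = Matrix.circulant (secularSymbol n a ℓ k) := by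
  have ha' (h : Fin d) : (a h : ZMod n) ≠ -a h := by
    rw [Ne, eq_neg_iff_add_eq_zero, ← two_mul]
    exact_mod_cast (ZMod.natCast_eq_zero_iff _ _).not.2 (ha h)
  ext i j
  simp only [Mmat, Matrix.circulant_apply, secularSymbol, cayleySymbol_apply _ ha', sub_eq_zero]

lemma sum_Mmat_symbol_mul_exp_pow [NeZero n] (ha : ∀ h, ¬n ∣ 2 * a h) (ℓ : Fin d → ℝ) (k : ℝ)
    {v : ZMod n → ℝ} (hv : ∀ i j, Mmat n d a ℓ k i j = v (i - j)) (j : ℕ) :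
    ∑ m ∈ range n, (v (m : ZMod n) : ℂ) *
        Complex.exp (2 * (Real.pi : ℂ) * Complex.I / n) ^ (j * m) =
      ((2 * ∑ h : Fin d, (-(Real.cos (k * ℓ h) / Real.sin (k * ℓ h)) +
        Real.cos (2 * Real.pi * j * a h / n) * (1 / Real.sin (k * ℓ h))) : ℝ) : ℂ) := by
  have hv_eq : v = secularSymbol n a ℓ k :=
    Matrix.circulant_injective <| (Matrix.ext fun i j ↦ (hv i j).symm).trans
      (Mmat_eq_circulant ha ℓ k)
  let χ : AddChar (ZMod n) ℂ := ZMod.stdAddChar.mulShift (j : ZMod n)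
  have χ_natCast (m : ℕ) : χ m = ZMod.stdAddChar ((j * m : ℕ) : ZMod n) := by
    rw [AddChar.mulShift_apply, Nat.cast_mul]
  have re_χ (m : ℕ) : (χ m).re = Real.cos (2 * Real.pi * j * m / n) := by
    rw [χ_natCast, re_stdAddChar_natCast, Nat.cast_mul, ← mul_assoc]
  simp only [exp_two_pi_mul_I_div_pow_eq_stdAddChar, ← χ_natCast]
  rw [sum_range_natCast_zmod n fun x ↦ (v x : ℂ) * χ x, hv_eq]
  refine (sum_cayleySymbol_mul_addChar _ _ _ χ).trans (congrArg Complex.ofReal ?_)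
  simp only [re_χ, sum_add_distrib, sum_neg_distrib]
  ring

end SecularMatrix

theorem Mmat_eigenvalues_general (n d : ℕ) [NeZero n] (a : Fin d → ℕ) (ha : ∀ h, ¬n ∣ 2 * a h)
    (ℓ : Fin d → ℝ) (k : ℝ) (hk : ∀ h, Real.sin (k * ℓ h) ≠ 0)
    (v : ZMod n → ℝ) (hv : ∀ i j, Mmat n d a ℓ k i j = v (i - j)) (j : ℕ) :
    (j = 0 →
      ∑ m ∈ range n, (v (m : ZMod n) : ℂ) *
          Complex.exp (2 * (Real.pi : ℂ) * Complex.I / n) ^ (j * m) =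
        ((2 * ∑ h : Fin d, Real.tan (k * ℓ h / 2) : ℝ) : ℂ)) ∧
    (∑ m ∈ range n, (v (m : ZMod n) : ℂ) *
        Complex.exp (2 * (Real.pi : ℂ) * Complex.I / n) ^ (j * m) =
      ((2 * ∑ h : Fin d,
          (-(Real.cos (k * ℓ h) / Real.sin (k * ℓ h)) +
            Real.cos (2 * Real.pi * j * a h / n) * (1 / Real.sin (k * ℓ h))) : ℝ) : ℂ)) ∧
    (2 * j = n →
      ∑ m ∈ range n, (v (m : ZMod n) : ℂ) *
          Complex.exp (2 * (Real.pi : ℂ) * Complex.I / n) ^ (j * m) =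
        ((2 * (∑ h ∈ univ with Even (a h), Real.tan (k * ℓ h / 2)
             - ∑ h ∈ univ with Odd (a h),
                 Real.cos (k * ℓ h / 2) / Real.sin (k * ℓ h / 2)) : ℝ) : ℂ)) := by
  have hsum := sum_Mmat_symbol_mul_exp_pow ha ℓ k hv j
  refine ⟨fun hj ↦ hsum.trans ?_, hsum, fun hj ↦ hsum.trans ?_⟩
  · have hcos (h : Fin d) : Real.cos (2 * Real.pi * j * a h / n) = 1 := by simp [hj]
    simp only [hcos, ← one_sub_cos_div_sin_eq_tan_half (hk _)]
    ring_nf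
  · have hcos (h : Fin d) : Real.cos (2 * Real.pi * j * a h / n) = (-1) ^ a h := by
      have hn : (n : ℝ) = 2 * j := mod_cast hj.symm
      rw [← Real.cos_nat_mul_pi]
      congr 1
      rw [div_eq_iff (NeZero.ne _), hn]
      ring
    simp only [hcos, neg_cot_add_neg_one_pow_mul_csc (hk _), sum_sub_distrib, sum_filter]

/-- The eigenvalues `∑_{m=0}^{n-1} v(m) ω^{jm}` (with `ω = exp(2πi/n)`) of the
circulant secular matrix `M(k)` with symbol `v` equal the secular functions
`p_j(k)` for `0 ≤ j ≤ ⌊n/2⌋`. -/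
theorem Mmat_eigenvalues (n d : ℕ) [NeZero n] (a : Fin d → ℕ) (hd : 1 ≤ d)
    (hpos : ∀ h, 0 < a h) (hmono : StrictMono a) (hlt : ∀ h, 2 * a h < n)
    (ℓ : Fin d → ℝ) (hℓ : ∀ h, 0 < ℓ h) (k : ℝ)
    (hk : ∀ h, Real.sin (k * ℓ h) ≠ 0)
    (v : ZMod n → ℝ) (hv : ∀ i j, Mmat n d a ℓ k i j = v (i - j))
    (j : ℕ) (hj : j ≤ n / 2) :
    (j = 0 →
      ∑ m ∈ Finset.range n, (v (m : ZMod n) : ℂ) *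
          Complex.exp (2 * (Real.pi : ℂ) * Complex.I / n) ^ (j * m) =
        ((2 * ∑ h : Fin d, Real.tan (k * ℓ h / 2) : ℝ) : ℂ)) ∧
    (1 ≤ j ∧ j ≤ (n - 1) / 2 →
      ∑ m ∈ Finset.range n, (v (m : ZMod n) : ℂ) *
          Complex.exp (2 * (Real.pi : ℂ) * Complex.I / n) ^ (j * m) =
        ((2 * ∑ h : Fin d,
            (-(Real.cos (k * ℓ h) / Real.sin (k * ℓ h)) +
              Real.cos (2 * Real.pi * j * a h / n) * (1 / Real.sin (k * ℓ h))) : ℝ) : ℂ)) ∧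
    (Even n ∧ 2 * j = n →
      ∑ m ∈ Finset.range n, (v (m : ZMod n) : ℂ) *
          Complex.exp (2 * (Real.pi : ℂ) * Complex.I / n) ^ (j * m) =
        ((2 * (∑ h ∈ Finset.univ.filter (fun h => Even (a h)), Real.tan (k * ℓ h / 2)
             - ∑ h ∈ Finset.univ.filter (fun h => Odd (a h)),
                 Real.cos (k * ℓ h / 2) / Real.sin (k * ℓ h / 2)) : ℝ) : ℂ)) := by
  obtain ⟨h₀, hmid, hhalf⟩ := Mmat_eigenvalues_general n d a
    (fun h ↦ Nat.not_dvd_of_pos_of_lt (Nat.mul_pos two_pos (hpos h)) (hlt h)) ℓ k hk v hv j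
  exact ⟨h₀, fun _ ↦ hmid, fun hn ↦ hhalf hn.2⟩
end

section
/- Let ℓ_1,…,ℓ_d > 0 and let c_1,…,c_d ∈ [−1,1]. Define q(k) = ∑_{h=1}^d [c_h·csc(kℓ_h) − cot(kℓ_h)]. Then at every k ∈ ℝ with sin(kℓ_h) ≠ 0 for all h, q is differentiable with q'(k) = ∑_{h=1}^d ℓ_h·csc(kℓ_h)·(csc(kℓ_h) − c_h·cot(kℓ_h)), and q'(k) > 0. In particular, for a circulant graph with symmetric edge lengths and 1 ≤ j ≤ ⌊(n−1)/2⌋, the function p_j(k) = 2∑_{h=1}^d [−cot(kℓ_h) + cos(2πja_h/n)·csc(kℓ_h)] has strictly positive derivative wherever all sin(kℓ_h) ≠ 0, so p_j is strictly increasing on every open interval avoiding its singularities. -/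
open Finset

/-!
With `θ = k ℓ`, each summand is `c csc θ - cot θ = (c - cos θ) / sin θ`. Since
`sin² θ + cos² θ = 1`, the derivative of this quotient is `(1 - c cos θ) / sin² θ`, which is
positive because `|c| ≤ 1` and `|cos θ| < 1` wherever `sin θ ≠ 0`.
-/

theorem hasDerivAt_sub_cos_div_sin (c : ℝ) {θ : ℝ} (hθ : Real.sin θ ≠ 0) :
    HasDerivAt (fun x : ℝ => (c - Real.cos x) / Real.sin x)
      ((1 - c * Real.cos θ) / Real.sin θ ^ 2) θ := by
  have quotient_rule :=
    ((Real.hasDerivAt_cos θ).const_sub c).fun_div (Real.hasDerivAt_sin θ) hθ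
  refine quotient_rule.congr_deriv ?_
  congr 1
  linear_combination Real.sin_sq_add_cos_sq θ

theorem abs_cos_lt_one_of_sin_ne_zero {θ : ℝ} (hθ : Real.sin θ ≠ 0) : |Real.cos θ| < 1 := by
  rw [← sq_lt_one_iff_abs_lt_one, Real.cos_sq']
  exact sub_lt_self 1 (sq_pos_of_ne_zero hθ)

theorem mul_cos_lt_one {c θ : ℝ} (hc : |c| ≤ 1) (hθ : Real.sin θ ≠ 0) : c * Real.cos θ < 1 :=
  calc
    c * Real.cos θ ≤ |c| * |Real.cos θ| := (le_abs_self _).trans_eq (abs_mul _ _)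
    _ < 1 := mul_lt_one_of_nonneg_of_lt_one_right hc (abs_nonneg _)
      (abs_cos_lt_one_of_sin_ne_zero hθ)

section Secular

variable {ι : Type*} [Fintype ι] {ℓ c : ι → ℝ} {k : ℝ}

/-- The function `q(k) = ∑ᵢ (cᵢ csc(k ℓᵢ) - cot(k ℓᵢ))` over a finite index type; it is half the
secular function `p_j` when `cᵢ = cos(2πjaᵢ/n)`. Cosecant and cotangent are written as quotients,
so a summand takes the junk value `0` where its sine vanishes. -/
noncomputable def secular (ℓ c : ι → ℝ) (k : ℝ) : ℝ :=
  ∑ i, (c i * (1 / Real.sin (k * ℓ i)) - Real.cos (k * ℓ i) / Real.sin (k * ℓ i))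

/-- The expression `q'(k) = ∑ᵢ ℓᵢ csc(k ℓᵢ) (csc(k ℓᵢ) - cᵢ cot(k ℓᵢ))`, which is the derivative of
`secular` at the points where no `sin(k ℓᵢ)` vanishes. -/
noncomputable def secularDeriv (ℓ c : ι → ℝ) (k : ℝ) : ℝ :=
  ∑ i, ℓ i * (1 / Real.sin (k * ℓ i)) *
    (1 / Real.sin (k * ℓ i) - c i * (Real.cos (k * ℓ i) / Real.sin (k * ℓ i)))

theorem secular_eq_sum_div (ℓ c : ι → ℝ) (k : ℝ) :
    secular ℓ c k = ∑ i, (c i - Real.cos (k * ℓ i)) / Real.sin (k * ℓ i) :=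
  sum_congr rfl fun i _ => by ring

theorem secularDeriv_eq_sum_div (ℓ c : ι → ℝ) (k : ℝ) :
    secularDeriv ℓ c k =
      ∑ i, (1 - c i * Real.cos (k * ℓ i)) / Real.sin (k * ℓ i) ^ 2 * ℓ i :=
  sum_congr rfl fun i _ => by ring

theorem hasDerivAt_secular (hk : ∀ i, Real.sin (k * ℓ i) ≠ 0) :
    HasDerivAt (secular ℓ c) (secularDeriv ℓ c k) k := by
  rw [funext (secular_eq_sum_div ℓ c), secularDeriv_eq_sum_div]
  refine HasDerivAt.fun_sum fun i _ => ?_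
  have chain_rule :=
    (hasDerivAt_sub_cos_div_sin (c i) (hk i)).comp k (hasDerivAt_mul_const (ℓ i))
  exact chain_rule

theorem secularDeriv_pos [Nonempty ι] (hℓ : ∀ i, 0 < ℓ i) (hc : ∀ i, |c i| ≤ 1)
    (hk : ∀ i, Real.sin (k * ℓ i) ≠ 0) : 0 < secularDeriv ℓ c k := by
  rw [secularDeriv_eq_sum_div]
  refine sum_pos (fun i _ => mul_pos (div_pos ?_ ?_) (hℓ i)) univ_nonempty
  · exact sub_pos.mpr (mul_cos_lt_one (hc i) (hk i))
  · exact sq_pos_of_ne_zero (hk i)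

theorem secular_strictly_increasing_general [Nonempty ι] (hℓ : ∀ i, 0 < ℓ i)
    (hc : ∀ i, |c i| ≤ 1) :
    (∀ k : ℝ, (∀ i, Real.sin (k * ℓ i) ≠ 0) →
      HasDerivAt (secular ℓ c) (secularDeriv ℓ c k) k ∧ 0 < secularDeriv ℓ c k) ∧
    (∀ D : Set ℝ, Convex ℝ D → (∀ x ∈ D, ∀ i, Real.sin (x * ℓ i) ≠ 0) →
      StrictMonoOn (secular ℓ c) D) := by
  refine ⟨fun k hk => ⟨hasDerivAt_secular hk, secularDeriv_pos hℓ hc hk⟩, fun D hD hsin => ?_⟩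
  have hderiv : ∀ x ∈ D, HasDerivAt (secular ℓ c) (secularDeriv ℓ c x) x :=
    fun x hx => hasDerivAt_secular (hsin x hx)
  exact strictMonoOn_of_hasDerivWithinAt_pos hD
    (HasDerivAt.continuousOn hderiv)
    (fun x hx => (hderiv x (interior_subset hx)).hasDerivWithinAt)
    (fun x hx => secularDeriv_pos hℓ hc (hsin x (interior_subset hx)))

end Secular

/-- The function `q(k) = ∑_h [c_h csc(k ℓ_h) - cot(k ℓ_h)]` (with
`c_h ∈ [-1,1]`, e.g. `c_h = cos(2πja_h/n)` for the secular function `p_j/2`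
of an edge-symmetric circulant graph) is differentiable wherever all
`sin(k ℓ_h) ≠ 0`, with derivative
`q'(k) = ∑_h ℓ_h csc(k ℓ_h)(csc(k ℓ_h) - c_h cot(k ℓ_h)) > 0`; consequently
`q` is strictly increasing on every open interval avoiding its singularities. -/
theorem secular_strictly_increasing (d : ℕ) (hd : 1 ≤ d) (ℓ : Fin d → ℝ)
    (hℓ : ∀ h, 0 < ℓ h) (c : Fin d → ℝ)
    (hc : ∀ h, c h ∈ Set.Icc (-1 : ℝ) 1) :
    (∀ k : ℝ, (∀ h, Real.sin (k * ℓ h) ≠ 0) →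
      HasDerivAt (fun x : ℝ => ∑ h : Fin d,
          (c h * (1 / Real.sin (x * ℓ h)) -
            Real.cos (x * ℓ h) / Real.sin (x * ℓ h)))
        (∑ h : Fin d, ℓ h * (1 / Real.sin (k * ℓ h)) *
          (1 / Real.sin (k * ℓ h) -
            c h * (Real.cos (k * ℓ h) / Real.sin (k * ℓ h)))) k ∧
      0 < ∑ h : Fin d, ℓ h * (1 / Real.sin (k * ℓ h)) *
          (1 / Real.sin (k * ℓ h) -
            c h * (Real.cos (k * ℓ h) / Real.sin (k * ℓ h)))) ∧
    (∀ α β : ℝ, α < β → (∀ x ∈ Set.Ioo α β, ∀ h, Real.sin (x * ℓ h) ≠ 0) →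
      StrictMonoOn (fun x : ℝ => ∑ h : Fin d,
          (c h * (1 / Real.sin (x * ℓ h)) -
            Real.cos (x * ℓ h) / Real.sin (x * ℓ h)))
        (Set.Ioo α β)) := by
  have : Nonempty (Fin d) := ⟨⟨0, hd⟩⟩
  have general := secular_strictly_increasing_general hℓ fun h => abs_le.mpr (hc h)
  exact ⟨general.1, fun α β _ => general.2 (Set.Ioo α β) (convex_Ioo α β)⟩
end

section
/- Let ℓ_1,…,ℓ_d > 0 and let A = {(2m+1)π/ℓ_h : m a nonnegative integer, 1 ≤ h ≤ d} be the set of positive singularities of the function p_0(k) = 2∑_{h=1}^d tan(kℓ_h/2). Let α, β ∈ A with α < β and (α,β) ∩ A = ∅ (i.e. α and β are consecutive points of A). Then there exists exactly one k ∈ (α,β) such that ∑_{h=1}^d tan(kℓ_h/2) = 0. -/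
open Finset

/-! The function `k ↦ ∑ h, tan (k * ℓ h / 2)` is continuous and strictly increasing between two
consecutive poles. At the left pole at least one summand tends to `-∞`, and the others are bounded
above by monotonicity, so the sum tends to `-∞`; likewise it tends to `+∞` at the right pole. Hence
it maps the gap bijectively onto `ℝ`. -/

open Filter Topology

section Order

variable {X M : Type*} [LinearOrder X] [TopologicalSpace X] [OrderClosedTopology X]
  [DenselyOrdered X] [Preorder M] {a b : X} {f : X → M}

lemma isBoundedUnder_le_nhdsGT_of_monotoneOn (hab : a < b) (hf : MonotoneOn f (Set.Ioo a b)) :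
    (𝓝[>] a).IsBoundedUnder (· ≤ ·) f := by
  obtain ⟨c, hac, hcb⟩ := exists_between hab
  refine isBoundedUnder_of_eventually_le (a := f c) ?_
  filter_upwards [Ioo_mem_nhdsGT hac] with x hx
  exact hf ⟨hx.1, hx.2.trans hcb⟩ ⟨hac, hcb⟩ hx.2.le

lemma isBoundedUnder_ge_nhdsLT_of_monotoneOn (hab : a < b) (hf : MonotoneOn f (Set.Ioo a b)) :
    (𝓝[<] b).IsBoundedUnder (· ≥ ·) f := by
  obtain ⟨c, hac, hcb⟩ := exists_between hab
  refine isBoundedUnder_of_eventually_ge (a := f c) ?_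
  filter_upwards [Ioo_mem_nhdsLT hcb] with x hx
  exact hf ⟨hac, hcb⟩ ⟨hac.trans hx.1, hx.2⟩ hx.1.le

end Order

section Sum

variable {ι X M : Type*} [AddCommGroup M] [PartialOrder M] [IsOrderedAddMonoid M]
  {s : Finset ι} {i : ι} {f : ι → X → M} {l : Filter X}

lemma tendsto_sum_atBot_of_isBoundedUnder_le (hi : i ∈ s) (hfi : Tendsto (f i) l atBot)
    (hf : ∀ j ∈ s, l.IsBoundedUnder (· ≤ ·) (f j)) :
    Tendsto (∑ j ∈ s, f j) l atBot := by
  classical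
  obtain ⟨C, hC⟩ := isBoundedUnder_le_sum (s.erase i) fun j hj ↦ hf j (mem_of_mem_erase hj)
  rw [← add_sum_erase s f hi]
  exact tendsto_atBot_add_right_of_ge' l C hfi (eventually_map.1 hC)

lemma tendsto_sum_atTop_of_isBoundedUnder_ge (hi : i ∈ s) (hfi : Tendsto (f i) l atTop)
    (hf : ∀ j ∈ s, l.IsBoundedUnder (· ≥ ·) (f j)) :
    Tendsto (∑ j ∈ s, f j) l atTop :=
  tendsto_sum_atBot_of_isBoundedUnder_le (M := Mᵒᵈ) hi hfi hf

end Sum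

section Bijection

variable {X M : Type*} [ConditionallyCompleteLinearOrder X] [TopologicalSpace X] [OrderTopology X]
  [DenselyOrdered X] [LinearOrder M] [TopologicalSpace M] {a b : X}

lemma bijOn_Ioo_univ_of_strictMonoOn [OrderClosedTopology M] {f : X → M} (hab : a < b)
    (hcont : ContinuousOn f (Set.Ioo a b)) (hmono : StrictMonoOn f (Set.Ioo a b))
    (hbot : Tendsto f (𝓝[>] a) atBot) (htop : Tendsto f (𝓝[<] b) atTop) :
    Set.BijOn f (Set.Ioo a b) Set.univ := by
  have := nhdsGT_neBot_of_exists_gt ⟨b, hab⟩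
  have := nhdsLT_neBot_of_exists_lt ⟨a, hab⟩
  exact ⟨Set.mapsTo_univ _ _, hmono.injOn,
    isPreconnected_Ioo.intermediate_value_Iii (le_principal_iff.2 (Ioo_mem_nhdsGT hab))
      (le_principal_iff.2 (Ioo_mem_nhdsLT hab)) hcont hbot htop⟩

lemma bijOn_sum_Ioo_univ_of_strictMonoOn [AddCommGroup M] [IsOrderedAddMonoid M] [OrderTopology M]
    {ι : Type*} {s : Finset ι} {f : ι → X → M} {i j : ι} (hab : a < b)
    (hcont : ∀ h ∈ s, ContinuousOn (f h) (Set.Ioo a b))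
    (hmono : ∀ h ∈ s, StrictMonoOn (f h) (Set.Ioo a b))
    (hi : i ∈ s) (hbot : Tendsto (f i) (𝓝[>] a) atBot)
    (hj : j ∈ s) (htop : Tendsto (f j) (𝓝[<] b) atTop) :
    Set.BijOn (∑ h ∈ s, f h) (Set.Ioo a b) Set.univ := by
  refine bijOn_Ioo_univ_of_strictMonoOn hab ?continuous ?strictMono ?bot ?top
  case continuous =>
    rw [Finset.sum_fn]
    exact continuousOn_finsetSum s hcont
  case strictMono =>
    intro x hx y hy hxy
    simp only [Finset.sum_apply]
    exact sum_lt_sum_of_nonempty ⟨i, hi⟩ fun h hh ↦ hmono h hh hx hy hxy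
  case bot =>
    exact tendsto_sum_atBot_of_isBoundedUnder_le hi hbot fun h hh ↦
      isBoundedUnder_le_nhdsGT_of_monotoneOn hab (hmono h hh).monotoneOn
  case top =>
    exact tendsto_sum_atTop_of_isBoundedUnder_ge hj htop fun h hh ↦
      isBoundedUnder_ge_nhdsLT_of_monotoneOn hab (hmono h hh).monotoneOn

end Bijection

section Tan

open Real

lemma strictMonoOn_tan_of_cos_ne_zero {s : Set ℝ} (hs : Convex ℝ s) (hcos : ∀ x ∈ s, cos x ≠ 0) :
    StrictMonoOn tan s := by
  refine strictMonoOn_of_deriv_pos hs (continuousOn_tan.mono hcos) fun x hx ↦ ?_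
  have := hcos x (interior_subset hx)
  rw [deriv_tan]
  positivity

lemma tendsto_tan_nhdsGT_of_cos_eq_zero {x : ℝ} (hx : cos x = 0) :
    Tendsto tan (𝓝[>] x) atBot := by
  obtain ⟨n, rfl⟩ := cos_eq_zero_iff.1 hx
  have hn : (2 * n + 1) * π / 2 = -(π / 2) + (n + 1 : ℤ) * π := by push_cast; ring
  rw [hn, ← map_add_right_nhdsGT, tendsto_map'_iff]
  simpa only [Function.comp_def, tan_add_int_mul_pi] using tendsto_tan_neg_pi_div_two

lemma tendsto_tan_nhdsLT_of_cos_eq_zero {x : ℝ} (hx : cos x = 0) :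
    Tendsto tan (𝓝[<] x) atTop := by
  obtain ⟨n, rfl⟩ := cos_eq_zero_iff.1 hx
  have hn : (2 * n + 1) * π / 2 = π / 2 + n * π := by ring
  rw [hn, ← map_add_right_nhdsLT, tendsto_map'_iff]
  simpa only [Function.comp_def, tan_add_int_mul_pi] using tendsto_tan_pi_div_two

section Rescaled

variable {l : ℝ}

lemma strictMonoOn_tan_mul_div_two (hl : 0 < l) {s : Set ℝ} (hs : Convex ℝ s)
    (hcos : ∀ k ∈ s, cos (k * l / 2) ≠ 0) : StrictMonoOn (fun k ↦ tan (k * l / 2)) s := by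
  simp only [mul_div_assoc] at hcos ⊢
  have himage : Convex ℝ ((· * (l / 2)) '' s) := hs.linear_image (LinearMap.mulRight ℝ (l / 2))
  exact (strictMonoOn_tan_of_cos_ne_zero himage (Set.forall_mem_image.2 hcos)).comp
    ((strictMono_mul_right_of_pos (half_pos hl)).strictMonoOn s) (Set.mapsTo_image _ s)

lemma tendsto_tan_mul_div_two_nhdsGT (hl : 0 < l) {a : ℝ} (ha : cos (a * l / 2) = 0) :
    Tendsto (fun k ↦ tan (k * l / 2)) (𝓝[>] a) atBot := by
  simp only [mul_div_assoc] at ha ⊢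
  exact (tendsto_tan_nhdsGT_of_cos_eq_zero ha).comp
    (TendstoNhdsWithinIoi.mul_const (half_pos hl) tendsto_id)

lemma tendsto_tan_mul_div_two_nhdsLT (hl : 0 < l) {a : ℝ} (ha : cos (a * l / 2) = 0) :
    Tendsto (fun k ↦ tan (k * l / 2)) (𝓝[<] a) atTop := by
  simp only [mul_div_assoc] at ha ⊢
  exact (tendsto_tan_nhdsLT_of_cos_eq_zero ha).comp
    (TendstoNhdsWithinIio.mul_const (half_pos hl) tendsto_id)

lemma pos_and_cos_mul_div_two_eq_zero_iff (hl : 0 < l) {x : ℝ} :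
    0 < x ∧ cos (x * l / 2) = 0 ↔ ∃ m : ℕ, x = (2 * m + 1) * π / l := by
  constructor
  · rintro ⟨hx, hcos⟩
    obtain ⟨n, hn⟩ := cos_eq_zero_iff.1 hcos
    have hpos : 0 < (2 * n + 1 : ℝ) := by
      have : 0 < (2 * n + 1 : ℝ) * π / 2 := hn ▸ by positivity
      exact pos_of_mul_pos_left (by linarith) pi_pos.le
    have hn0 : 0 ≤ n := by
      have : 0 < 2 * n + 1 := by exact_mod_cast hpos
      omega
    lift n to ℕ using hn0
    refine ⟨n, ?_⟩
    rw [eq_div_iff hl.ne']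
    push_cast at hn
    linarith
  · rintro ⟨m, rfl⟩
    refine ⟨by positivity, cos_eq_zero_iff.2 ⟨m, ?_⟩⟩
    rw [div_mul_cancel₀ _ hl.ne', Int.cast_natCast]

end Rescaled

end Tan

section TanSum

variable {ι : Type*}

/-- The poles, of either sign, of the terms `tan (k * ℓ i / 2)`. Zeros of the cosine are used since
Mathlib's `tan` takes the value `0` at a pole. -/
def tanPoles (ℓ : ι → ℝ) : Set ℝ :=
  {k | ∃ i, Real.cos (k * ℓ i / 2) = 0}

lemma setOf_odd_mul_pi_div_eq_tanPoles_inter_Ioi {ℓ : ι → ℝ} (hℓ : ∀ i, 0 < ℓ i) :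
    {x : ℝ | ∃ m : ℕ, ∃ i, x = (2 * m + 1) * Real.pi / ℓ i} = tanPoles ℓ ∩ Set.Ioi 0 := by
  ext x
  calc (∃ m : ℕ, ∃ i, x = (2 * m + 1) * Real.pi / ℓ i)
      ↔ ∃ i, ∃ m : ℕ, x = (2 * m + 1) * Real.pi / ℓ i := exists_comm
    _ ↔ ∃ i, 0 < x ∧ Real.cos (x * ℓ i / 2) = 0 :=
        exists_congr fun i ↦ (pos_and_cos_mul_div_two_eq_zero_iff (hℓ i)).symm
    _ ↔ x ∈ tanPoles ℓ ∩ Set.Ioi 0 := exists_and_left.trans and_comm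

theorem p0_unique_zero_between_asymptotes_general [Fintype ι] {ℓ : ι → ℝ} (hℓ : ∀ i, 0 < ℓ i)
    {α β : ℝ} (hα : α ∈ tanPoles ℓ) (hβ : β ∈ tanPoles ℓ) (hαβ : α < β)
    (hgap : Disjoint (Set.Ioo α β) (tanPoles ℓ)) (c : ℝ) :
    ∃! k, k ∈ Set.Ioo α β ∧ ∑ i, Real.tan (k * ℓ i / 2) = c := by
  have hcos (i : ι) : ∀ k ∈ Set.Ioo α β, Real.cos (k * ℓ i / 2) ≠ 0 :=
    fun k hk h0 ↦ Set.disjoint_left.1 hgap hk ⟨i, h0⟩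
  obtain ⟨i, hi⟩ := hα
  obtain ⟨j, hj⟩ := hβ
  have hbij : Set.BijOn (∑ h, fun k ↦ Real.tan (k * ℓ h / 2)) (Set.Ioo α β) Set.univ :=
    bijOn_sum_Ioo_univ_of_strictMonoOn hαβ
      (fun h _ ↦ Real.continuousOn_tan.comp (by fun_prop) (hcos h))
      (fun h _ ↦ strictMonoOn_tan_mul_div_two (hℓ h) (convex_Ioo α β) (hcos h))
      (mem_univ i) (tendsto_tan_mul_div_two_nhdsGT (hℓ i) hi)
      (mem_univ j) (tendsto_tan_mul_div_two_nhdsLT (hℓ j) hj)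
  rw [Finset.sum_fn] at hbij
  obtain ⟨k, hk, hkc⟩ := hbij.surjOn (Set.mem_univ c)
  exact ⟨k, ⟨hk, hkc⟩, fun y hy ↦ hbij.injOn hy.1 hk (hy.2.trans hkc.symm)⟩

end TanSum

/-- Between each pair of consecutive singularities of
`p_0(k) = 2 ∑_h tan(k ℓ_h / 2)` there is exactly one zero of `p_0`. -/
theorem p0_unique_zero_between_asymptotes (d : ℕ) (hd : 1 ≤ d)
    (ℓ : Fin d → ℝ) (hℓ : ∀ h, 0 < ℓ h) (A : Set ℝ)
    (hA : A = {x : ℝ | ∃ m : ℕ, ∃ h : Fin d, x = (2 * m + 1) * Real.pi / ℓ h})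
    (α β : ℝ) (hα : α ∈ A) (hβ : β ∈ A) (hαβ : α < β)
    (hgap : Set.Ioo α β ∩ A = ∅) :
    ∃! k : ℝ, k ∈ Set.Ioo α β ∧ ∑ h : Fin d, Real.tan (k * ℓ h / 2) = 0 := by
  rw [hA, setOf_odd_mul_pi_div_eq_tanPoles_inter_Ioi hℓ] at hα hβ hgap
  exact p0_unique_zero_between_asymptotes_general hℓ hα.1 hβ.1 hαβ (Set.disjoint_left.2
    fun k hk hpole ↦ hgap.subset ⟨hk, hpole, hα.2.trans hk.1⟩) 0
end

section
/- Let ℓ_1,…,ℓ_d > 0 be such that ℓ_h/ℓ_{h'} is irrational for all h ≠ h'. Let 0 ≤ a < b be real numbers and let N_0(a,b) be the number of k ∈ (a,b) such that cos(kℓ_h/2) ≠ 0 for all h and ∑_{h=1}^d tan(kℓ_h/2) = 0. Then this set of zeros is finite and (b−a)·(∑_{h=1}^d ℓ_h)/(2π) − d − 1 ≤ N_0(a,b) ≤ (b−a)·(∑_{h=1}^d ℓ_h)/(2π) + d + 1. -/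
open Finset

/-!
Each `tan (k ℓ_h / 2)` increases from `-∞` to `+∞` between consecutive poles, and positive
combinations of such functions with pairwise disjoint pole sets inherit this behaviour. Hence the
solutions of `∑ tan (k ℓ_h / 2) = t` interlace with the poles, and the two counts in `(a, b)` differ
by at most one. The poles of the `h`-th term form a progression of step `2π / ℓ_h`, so there are
`(b - a) ℓ_h / (2π)` of them up to an error of one. Incommensurability enters because a common pole
of two terms would make `ℓ_h / ℓ_h'` a quotient of odd integers.
-/

open Filter Topology
open scoped Function

section Interleaved

variable {α : Type*} [LinearOrder α] {s t : Set α}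

lemma ncard_le_ncard_add_one_of_interleaved (hs : s.Finite) (ht : t.Finite)
    (h : ∀ᵉ (x ∈ s) (y ∈ s), x < y → Disjoint (Set.Ioo x y) s → ∃ z ∈ t, x < z ∧ z < y) :
    s.ncard ≤ t.ncard + 1 := by
  rw [Set.ncard_eq_toFinset_card s hs, Set.ncard_eq_toFinset_card t ht]
  refine card_le_of_interleaved fun x hx y hy hxy hno ↦ ?_
  simp only [Set.Finite.mem_toFinset] at hx hy hno ⊢
  exact h x hx y hy hxy (Set.disjoint_right.2 hno)

lemma finite_of_interleaved (ht : t.Finite)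
    (h : ∀ᵉ (x ∈ s) (y ∈ s), x < y → ∃ z ∈ t, x < z ∧ z < y) : s.Finite := by
  by_contra hs
  obtain ⟨u, hus, hu⟩ := Set.Infinite.exists_subset_card_eq hs (t.ncard + 2)
  have hut : (u : Set α).ncard ≤ t.ncard + 1 :=
    ncard_le_ncard_add_one_of_interleaved u.finite_toSet ht
      fun x hx y hy hxy _ ↦ h x (hus hx) y (hus hy) hxy
  rw [Set.ncard_coe_finset] at hut
  lia

end Interleaved

/-- `f` is continuous off the set `P` of its poles and increases from `-∞` to `+∞` between any two
consecutive ones, like `Real.tan`. Nothing is assumed about the values of `f` on `P`. -/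
structure IncreasesBetweenPoles (f : ℝ → ℝ) (P : Set ℝ) : Prop where
  lt_of_disjoint : ∀ ⦃x y⦄, x < y → Disjoint (Set.Icc x y) P → f x < f y
  continuousAt : ∀ ⦃x⦄, x ∉ P → ContinuousAt f x
  tendsto_atTop : ∀ ⦃x⦄, x ∈ P → Tendsto f (𝓝[<] x) atTop
  tendsto_atBot : ∀ ⦃x⦄, x ∈ P → Tendsto f (𝓝[>] x) atBot

namespace IncreasesBetweenPoles

variable {f g : ℝ → ℝ} {P Q I : Set ℝ} {c t x y : ℝ}

lemma const_mul (hf : IncreasesBetweenPoles f P) (hc : 0 < c) :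
    IncreasesBetweenPoles (fun x ↦ c * f x) P where
  lt_of_disjoint _ _ hxy hP := mul_lt_mul_of_pos_left (hf.lt_of_disjoint hxy hP) hc
  continuousAt _ hx := (hf.continuousAt hx).const_mul c
  tendsto_atTop _ hx := (hf.tendsto_atTop hx).const_mul_atTop hc
  tendsto_atBot _ hx := (hf.tendsto_atBot hx).const_mul_atBot hc

lemma comp_mul_right (hf : IncreasesBetweenPoles f P) (hc : 0 < c) :
    IncreasesBetweenPoles (fun x ↦ f (x * c)) ((· * c) ⁻¹' P) where
  lt_of_disjoint x y hxy hP := by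
    rw [← Set.disjoint_image_left, Set.image_mul_right_Icc' x y hc] at hP
    exact hf.lt_of_disjoint (mul_lt_mul_of_pos_right hxy hc) hP
  continuousAt x hx := (hf.continuousAt hx).comp (f := (· * c)) (by fun_prop)
  tendsto_atTop x hx := (hf.tendsto_atTop hx).comp <|
    (continuous_mul_const c).continuousWithinAt.tendsto_nhdsWithin
      fun _ hy ↦ mul_lt_mul_of_pos_right hy hc
  tendsto_atBot x hx := (hf.tendsto_atBot hx).comp <|
    (continuous_mul_const c).continuousWithinAt.tendsto_nhdsWithin
      fun _ hy ↦ mul_lt_mul_of_pos_right hy hc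

lemma add (hf : IncreasesBetweenPoles f P) (hg : IncreasesBetweenPoles g Q)
    (hPQ : Disjoint P Q) : IncreasesBetweenPoles (fun x ↦ f x + g x) (P ∪ Q) where
  lt_of_disjoint x y hxy h := by
    rw [Set.disjoint_union_right] at h
    exact add_lt_add (hf.lt_of_disjoint hxy h.1) (hg.lt_of_disjoint hxy h.2)
  continuousAt x hx := by
    rw [Set.mem_union, not_or] at hx
    exact (hf.continuousAt hx.1).add (hg.continuousAt hx.2)
  tendsto_atTop := by
    rintro x (hx | hx)
    · exact (hf.tendsto_atTop hx).atTop_add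
        (hg.continuousAt (hPQ.notMem_of_mem_left hx)).continuousWithinAt
    · exact (hf.continuousAt (hPQ.notMem_of_mem_right hx)).continuousWithinAt.add_atTop
        (hg.tendsto_atTop hx)
  tendsto_atBot := by
    rintro x (hx | hx)
    · exact (hf.tendsto_atBot hx).atBot_add
        (hg.continuousAt (hPQ.notMem_of_mem_left hx)).continuousWithinAt
    · exact (hf.continuousAt (hPQ.notMem_of_mem_right hx)).continuousWithinAt.add_atBot
        (hg.tendsto_atBot hx)

lemma sum {ι : Type*} {f : ι → ℝ → ℝ} {P : ι → Set ℝ} {s : Finset ι} (hs : s.Nonempty)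
    (hf : ∀ i ∈ s, IncreasesBetweenPoles (f i) (P i))
    (hP : (s : Set ι).PairwiseDisjoint P) :
    IncreasesBetweenPoles (fun x ↦ ∑ i ∈ s, f i x) (⋃ i ∈ s, P i) := by
  induction hs using Finset.Nonempty.cons_induction with
  | singleton i => simpa using hf
  | cons i s hi _ ih =>
    simp only [forall_mem_cons, coe_cons, Set.pairwiseDisjoint_insert] at hf hP
    have hdisj : Disjoint (P i) (⋃ j ∈ s, P j) :=
      Set.disjoint_iUnion₂_right.2 fun j hj ↦ hP.2 j hj (ne_of_mem_of_not_mem hj hi).symm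
    simpa using hf.1.add (ih hf.2 hP.1) hdisj

lemma exists_pole_of_le (hf : IncreasesBetweenPoles f P) (hx : x ∉ P) (hy : y ∉ P) (hxy : x < y)
    (hle : f y ≤ f x) : ∃ z ∈ P, x < z ∧ z < y := by
  by_contra! hno
  refine (hf.lt_of_disjoint hxy (Set.disjoint_left.2 fun z hz hzP ↦ ?_)).not_ge hle
  have hxz : x < z := hz.1.lt_of_ne (ne_of_mem_of_not_mem hzP hx).symm
  exact ne_of_mem_of_not_mem hzP hy (hz.2.antisymm (hno z hzP hxz))

lemma exists_eq_of_disjoint (hf : IncreasesBetweenPoles f P) (hx : x ∈ P) (hy : y ∈ P)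
    (hxy : x < y) (hno : Disjoint (Set.Ioo x y) P) (t : ℝ) : ∃ z ∈ Set.Ioo x y, f z = t := by
  have hcont : ContinuousOn f (Set.Ioo x y) := fun z hz ↦
    (hf.continuousAt (hno.notMem_of_mem_left hz)).continuousWithinAt
  exact isPreconnected_Ioo.intermediate_value_Iii
    (le_principal_iff.2 (Ioo_mem_nhdsGT hxy)) (le_principal_iff.2 (Ioo_mem_nhdsLT hxy))
    hcont (hf.tendsto_atBot hx) (hf.tendsto_atTop hy) (Set.mem_univ t)

lemma exists_pole_between_solutions [I.OrdConnected] (hf : IncreasesBetweenPoles f P) :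
    ∀ᵉ (x ∈ {x ∈ I | x ∉ P ∧ f x = t}) (y ∈ {x ∈ I | x ∉ P ∧ f x = t}), x < y →
      ∃ z ∈ P ∩ I, x < z ∧ z < y := by
  rintro x ⟨hxI, hxP, hx⟩ y ⟨hyI, hyP, hy⟩ hxy
  obtain ⟨z, hzP, hxz, hzy⟩ := hf.exists_pole_of_le hxP hyP hxy (hy.trans hx.symm).le
  exact ⟨z, ⟨hzP, Set.Icc_subset I hxI hyI ⟨hxz.le, hzy.le⟩⟩, hxz, hzy⟩

lemma exists_solution_between_poles [I.OrdConnected] (hf : IncreasesBetweenPoles f P) :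
    ∀ᵉ (x ∈ P ∩ I) (y ∈ P ∩ I), x < y → Disjoint (Set.Ioo x y) (P ∩ I) →
      ∃ z ∈ {x ∈ I | x ∉ P ∧ f x = t}, x < z ∧ z < y := by
  rintro x ⟨hxP, hxI⟩ y ⟨hyP, hyI⟩ hxy hno
  have hsub : Set.Ioo x y ⊆ I := Set.Ioo_subset_Icc_self.trans (Set.Icc_subset I hxI hyI)
  have hnoP : Disjoint (Set.Ioo x y) P := Set.disjoint_left.2 fun z hz hzP ↦
    Set.disjoint_left.1 hno hz ⟨hzP, hsub hz⟩
  obtain ⟨z, hz, hzt⟩ := hf.exists_eq_of_disjoint hxP hyP hxy hnoP t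
  exact ⟨z, ⟨hsub hz, hnoP.notMem_of_mem_left hz, hzt⟩, hz⟩

lemma finite_solutions [I.OrdConnected] (hf : IncreasesBetweenPoles f P) (hP : (P ∩ I).Finite) :
    {x ∈ I | x ∉ P ∧ f x = t}.Finite :=
  finite_of_interleaved hP hf.exists_pole_between_solutions

lemma abs_ncard_solutions_sub_ncard_poles_le [I.OrdConnected] (hf : IncreasesBetweenPoles f P)
    (hP : (P ∩ I).Finite) :
    |({x ∈ I | x ∉ P ∧ f x = t}.ncard : ℝ) - (P ∩ I).ncard| ≤ 1 := by
  have hle : ({x ∈ I | x ∉ P ∧ f x = t}.ncard : ℝ) ≤ (P ∩ I).ncard + 1 := mod_cast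
    ncard_le_ncard_add_one_of_interleaved (hf.finite_solutions hP) hP
      fun x hx y hy hxy _ ↦ hf.exists_pole_between_solutions x hx y hy hxy
  have hge : ((P ∩ I).ncard : ℝ) ≤ {x ∈ I | x ∉ P ∧ f x = t}.ncard + 1 := mod_cast
    ncard_le_ncard_add_one_of_interleaved hP (hf.finite_solutions hP)
      hf.exists_solution_between_poles
  exact abs_sub_le_iff.2 ⟨by linarith, by linarith⟩

end IncreasesBetweenPoles

section Tan

variable {x : ℝ}

lemma tendsto_tan_atTop_of_cos_eq_zero (hx : Real.cos x = 0) :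
    Tendsto Real.tan (𝓝[<] x) atTop := by
  obtain ⟨m, rfl⟩ := Real.cos_eq_zero_iff.1 hx
  have hx : (2 * m + 1) * Real.pi / 2 - m * Real.pi = Real.pi / 2 := by ring
  have hshift : Tendsto (fun y ↦ y - m * Real.pi) (𝓝[<] ((2 * m + 1) * Real.pi / 2))
      (𝓝[<] (Real.pi / 2)) := hx ▸
    (continuous_sub_right (m * Real.pi)).continuousWithinAt.tendsto_nhdsWithin
      fun _ hy ↦ sub_lt_sub_right (Set.mem_Iio.1 hy) _
  exact (Real.tendsto_tan_pi_div_two.comp hshift).congr fun y ↦ Real.tan_sub_int_mul_pi y m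

lemma tendsto_tan_atBot_of_cos_eq_zero (hx : Real.cos x = 0) :
    Tendsto Real.tan (𝓝[>] x) atBot := by
  have hneg : Tendsto Real.tan (𝓝[<] (-x)) atTop :=
    tendsto_tan_atTop_of_cos_eq_zero (by rwa [Real.cos_neg])
  exact (tendsto_neg_atTop_atBot.comp (hneg.comp tendsto_neg_nhdsGT)).congr fun y ↦ by
    simp [Real.tan_neg]

lemma increasesBetweenPoles_tan : IncreasesBetweenPoles Real.tan {x | Real.cos x = 0} where
  lt_of_disjoint x y hxy hcos := by
    have hne : ∀ z ∈ Set.Icc x y, Real.cos z ≠ 0 := fun z hz ↦ Set.disjoint_left.1 hcos hz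
    have hmono : StrictMonoOn Real.tan (Set.Icc x y) := by
      refine strictMonoOn_of_deriv_pos (convex_Icc x y)
        (fun z hz ↦ (Real.continuousAt_tan.2 (hne z hz)).continuousWithinAt) fun z hz ↦ ?_
      have := hne z (interior_subset hz)
      rw [Real.deriv_tan]
      positivity
    exact hmono (Set.left_mem_Icc.2 hxy.le) (Set.right_mem_Icc.2 hxy.le) hxy
  continuousAt _ := Real.continuousAt_tan.2
  tendsto_atTop _ := tendsto_tan_atTop_of_cos_eq_zero
  tendsto_atBot _ := tendsto_tan_atBot_of_cos_eq_zero

end Tan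

section CosZeros

variable {a b p q x y ω : ℝ}

lemma abs_ncard_intCast_preimage_Ioo_sub_le (hxy : x ≤ y) :
    |((Int.cast ⁻¹' Set.Ioo x y : Set ℤ).ncard : ℝ) - (y - x)| ≤ 1 := by
  rw [Int.preimage_Ioo, ← coe_Ioo, Set.ncard_coe_finset, Int.card_Ioo]
  have hcast : (((⌈y⌉ - ⌊x⌋ - 1).toNat : ℤ) : ℝ) = max ((⌈y⌉ : ℝ) - ⌊x⌋ - 1) 0 := by
    rw [Int.ofNat_toNat]
    push_cast
    rfl
  rw [← Int.cast_natCast, hcast, abs_sub_le_iff, sub_le_iff_le_add]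
  have hlower : y - x - 1 ≤ ⌈y⌉ - ⌊x⌋ - 1 := by linarith [Int.le_ceil y, Int.floor_le x]
  have hupper : (⌈y⌉ : ℝ) - ⌊x⌋ - 1 ≤ 1 + (y - x) := by
    linarith [Int.ceil_lt_add_one y, Int.lt_floor_add_one x]
  exact ⟨max_le hupper (by linarith), by linarith [le_max_left ((⌈y⌉ : ℝ) - ⌊x⌋ - 1) 0]⟩

lemma setOf_cos_mul_eq_zero (hω : ω ≠ 0) :
    {k : ℝ | Real.cos (k * ω) = 0} = Set.range fun m : ℤ ↦ (m + 1 / 2) * (Real.pi / ω) := by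
  ext k
  simp only [Set.mem_ofPred_eq, Real.cos_eq_zero_iff, Set.mem_range]
  refine exists_congr fun m ↦ ?_
  rw [← eq_div_iff hω, eq_comm]
  ring_nf

lemma setOf_cos_mul_eq_zero_inter_Ioo (hω : 0 < ω) :
    {k : ℝ | Real.cos (k * ω) = 0} ∩ Set.Ioo a b =
      (fun m : ℤ ↦ (m + 1 / 2) * (Real.pi / ω)) ''
        (Int.cast ⁻¹' Set.Ioo (a / (Real.pi / ω) - 1 / 2) (b / (Real.pi / ω) - 1 / 2)) := by
  have hstep : 0 < Real.pi / ω := by positivity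
  rw [setOf_cos_mul_eq_zero hω.ne', Set.inter_comm, ← Set.image_preimage_eq_inter_range]
  congr 1
  ext m
  simp only [Set.mem_preimage, Set.mem_Ioo, sub_lt_iff_lt_add, lt_sub_iff_add_lt,
    div_lt_iff₀ hstep, lt_div_iff₀ hstep]

lemma finite_setOf_cos_mul_eq_zero_inter_Ioo (hω : 0 < ω) :
    ({k : ℝ | Real.cos (k * ω) = 0} ∩ Set.Ioo a b).Finite := by
  rw [setOf_cos_mul_eq_zero_inter_Ioo hω, Int.preimage_Ioo]
  exact (Set.finite_Ioo _ _).image _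

lemma abs_ncard_setOf_cos_mul_eq_zero_inter_Ioo_sub_le (hω : 0 < ω) (hab : a ≤ b) :
    |(({k : ℝ | Real.cos (k * ω) = 0} ∩ Set.Ioo a b).ncard : ℝ) - (b - a) * ω / Real.pi| ≤ 1 := by
  have hinj : Function.Injective fun m : ℤ ↦ (m + 1 / 2) * (Real.pi / ω) := fun m n hmn ↦ by
    simpa [hω.ne', Real.pi_ne_zero] using hmn
  have hlen : (b - a) * ω / Real.pi =
      (b / (Real.pi / ω) - 1 / 2) - (a / (Real.pi / ω) - 1 / 2) := by
    field_simp
    ring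
  rw [setOf_cos_mul_eq_zero_inter_Ioo hω, Set.ncard_image_of_injective _ hinj, hlen]
  exact abs_ncard_intCast_preimage_Ioo_sub_le (by gcongr)

lemma disjoint_setOf_cos_mul_eq_zero (hpq : Irrational (p / q)) :
    Disjoint {k : ℝ | Real.cos (k * p) = 0} {k : ℝ | Real.cos (k * q) = 0} := by
  refine Set.disjoint_left.2 fun k hp hq ↦ hpq ?_
  have hk : k ≠ 0 := by
    rintro rfl
    simp at hp
  obtain ⟨m, hm⟩ := Real.cos_eq_zero_iff.1 hp
  obtain ⟨n, hn⟩ := Real.cos_eq_zero_iff.1 hq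
  refine ⟨(2 * m + 1) / (2 * n + 1), ?_⟩
  rw [← mul_div_mul_left p q hk, hm, hn, div_div_div_cancel_right₀ two_ne_zero,
    mul_div_mul_right _ _ Real.pi_ne_zero]
  push_cast
  rfl

end CosZeros

lemma abs_ncard_iUnion_sub_sum_le {α ι : Type*} [Fintype ι] {s : ι → Set α} {r : ι → ℝ} {ε : ℝ}
    (hfin : ∀ i, (s i).Finite) (hs : Pairwise (Disjoint on s))
    (hr : ∀ i, |((s i).ncard : ℝ) - r i| ≤ ε) :
    |((⋃ i, s i).ncard : ℝ) - ∑ i, r i| ≤ Fintype.card ι * ε := by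
  rw [Set.ncard_iUnion_of_finite hfin hs, finsum_eq_sum_of_fintype, Nat.cast_sum,
    ← sum_sub_distrib]
  calc |∑ i, (((s i).ncard : ℝ) - r i)| ≤ ∑ i, |((s i).ncard : ℝ) - r i| := abs_sum_le_sum_abs _ _
    _ ≤ ∑ _ : ι, ε := sum_le_sum fun i _ ↦ hr i
    _ = Fintype.card ι * ε := by simp

theorem p0_zero_count_general {ι : Type*} [Fintype ι] [Nonempty ι] {c ℓ : ι → ℝ}
    (hc : ∀ i, 0 < c i) (hℓ : ∀ i, 0 < ℓ i)
    (hdisj : Pairwise (Disjoint on fun i ↦ {k : ℝ | Real.cos (k * ℓ i / 2) = 0}))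
    {a b : ℝ} (hab : a ≤ b) (t : ℝ) (Z : Set ℝ)
    (hZ : Z = {k : ℝ | k ∈ Set.Ioo a b ∧ (∀ i, Real.cos (k * ℓ i / 2) ≠ 0) ∧
      ∑ i, c i * Real.tan (k * ℓ i / 2) = t}) :
    Z.Finite ∧
    (b - a) * (∑ i, ℓ i) / (2 * Real.pi) - Fintype.card ι - 1 ≤ (Z.ncard : ℝ) ∧
    (Z.ncard : ℝ) ≤ (b - a) * (∑ i, ℓ i) / (2 * Real.pi) + Fintype.card ι + 1 := by
  simp_rw [mul_div_assoc _ (ℓ _)] at hdisj hZ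
  set P : ι → Set ℝ := fun i ↦ {k : ℝ | Real.cos (k * (ℓ i / 2)) = 0}
  have hincr : IncreasesBetweenPoles (fun k ↦ ∑ i, c i * Real.tan (k * (ℓ i / 2))) (⋃ i, P i) := by
    simpa using IncreasesBetweenPoles.sum univ_nonempty
      (fun i _ ↦ (increasesBetweenPoles_tan.comp_mul_right (half_pos (hℓ i))).const_mul (hc i))
      (hdisj.set_pairwise _)
  have hfin : ((⋃ i, P i) ∩ Set.Ioo a b).Finite := by
    rw [Set.iUnion_inter]
    exact Set.finite_iUnion fun i ↦ finite_setOf_cos_mul_eq_zero_inter_Ioo (half_pos (hℓ i))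
  have hpoles : |(((⋃ i, P i) ∩ Set.Ioo a b).ncard : ℝ) -
      (b - a) * (∑ i, ℓ i) / (2 * Real.pi)| ≤ Fintype.card ι := by
    convert abs_ncard_iUnion_sub_sum_le
      (fun i ↦ finite_setOf_cos_mul_eq_zero_inter_Ioo (half_pos (hℓ i)))
      (fun i j hij ↦ (hdisj hij).mono Set.inter_subset_left Set.inter_subset_left)
      (fun i ↦ abs_ncard_setOf_cos_mul_eq_zero_inter_Ioo_sub_le (half_pos (hℓ i)) hab) using 3
    · rw [Set.iUnion_inter]
    · rw [← sum_div, ← mul_sum, ← sum_div, mul_div_assoc', div_div]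
    · rw [mul_one]
  have hZ' : Z = {k ∈ Set.Ioo a b | k ∉ ⋃ i, P i ∧
      ∑ i, c i * Real.tan (k * (ℓ i / 2)) = t} := by
    simp [hZ, P]
  have hinter := hincr.abs_ncard_solutions_sub_ncard_poles_le (t := t) hfin
  rw [← hZ', abs_sub_le_iff] at hinter
  rw [abs_sub_le_iff] at hpoles
  exact ⟨hZ' ▸ hincr.finite_solutions hfin, by linarith, by linarith⟩

/-- Weyl-type bounds for the number `N_0(a,b)` of zeros of
`p_0(k) = 2 ∑_h tan(k ℓ_h / 2)` in the interval `(a,b)`, for incommensurate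
edge lengths: `(b-a)(∑_h ℓ_h)/(2π) - d - 1 ≤ N_0(a,b) ≤
(b-a)(∑_h ℓ_h)/(2π) + d + 1`. -/
theorem p0_zero_count (d : ℕ) (hd : 1 ≤ d) (ℓ : Fin d → ℝ)
    (hℓ : ∀ h, 0 < ℓ h)
    (hirr : ∀ h h', h ≠ h' → Irrational (ℓ h / ℓ h'))
    (a b : ℝ) (ha : 0 ≤ a) (hab : a < b) (Z : Set ℝ)
    (hZ : Z = {k : ℝ | k ∈ Set.Ioo a b ∧
      (∀ h, Real.cos (k * ℓ h / 2) ≠ 0) ∧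
      ∑ h : Fin d, Real.tan (k * ℓ h / 2) = 0}) :
    Z.Finite ∧
    (b - a) * (∑ h : Fin d, ℓ h) / (2 * Real.pi) - d - 1 ≤ (Z.ncard : ℝ) ∧
    (Z.ncard : ℝ) ≤ (b - a) * (∑ h : Fin d, ℓ h) / (2 * Real.pi) + d + 1 := by
  have : Nonempty (Fin d) := ⟨⟨0, hd⟩⟩
  have hdisj : Pairwise (Disjoint on fun h ↦ {k : ℝ | Real.cos (k * ℓ h / 2) = 0}) := by
    intro h h' hne
    simpa only [mul_div_assoc] using disjoint_setOf_cos_mul_eq_zero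
      ((div_div_div_cancel_right₀ two_ne_zero (ℓ h) (ℓ h')).symm ▸ hirr h h' hne)
  simpa using p0_zero_count_general (c := 1) (by simp) hℓ hdisj hab.le 0 Z (by simpa using hZ)
end

section
/- Let C_n(ℓ;a) be a circulant graph with 0 < a_1 < … < a_d < n/2 and symmetric edge lengths ℓ_1,…,ℓ_d > 0 such that ℓ_h/ℓ_{h'} is irrational for all h ≠ h'. Fix an integer j with 1 ≤ j ≤ ⌊(n−1)/2⌋ such that 2ja_h is not divisible by n for any h ∈ {1,…,d}. Let 0 ≤ a < b be real numbers and let N_j(a,b) be the number of k ∈ (a,b) such that sin(kℓ_h) ≠ 0 for all h and ∑_{h=1}^d [cos(2πja_h/n)·csc(kℓ_h) − cot(kℓ_h)] = 0. Then this set of zeros is finite and (b−a)·(∑_{h=1}^d ℓ_h)/π − d − 1 ≤ N_j(a,b) ≤ (b−a)·(∑_{h=1}^d ℓ_h)/π + d + 1. -/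
open Finset

/-!
For `|c| < 1` the function `θ ↦ (c - cos θ) / sin θ` increases strictly from `-∞` to `+∞` between
consecutive zeros of `sin`. A sum of such functions, rescaled by positive edge lengths, therefore
has the shape of the tangent: it vanishes exactly once between consecutive poles and at most once
on either side of all of them, so inside any interval the number of zeros and the number of poles
differ by at most one. The poles `mπ / ℓ_h` of the `h`-th term number `(β - α) ℓ_h / π` up to an
error of at most one, and for incommensurate lengths no pole other than `0` belongs to two terms.
-/

open Filter Real Topology

theorem finite_and_ncard_le_of_interleaved {X : Type*} [LinearOrder X] {S : Set X} {T : Finset X}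
    (h : ∀ x ∈ S, ∀ y ∈ S, x < y → ∃ t ∈ T, x < t ∧ t < y) :
    S.Finite ∧ S.ncard ≤ #T + 1 := by
  have card_le (F : Finset X) (hF : (F : Set X) ⊆ S) : #F ≤ #T + 1 :=
    card_le_of_interleaved fun x hx y hy hxy _ ↦ h x (hF hx) y (hF hy) hxy
  have hS : S.Finite := by
    by_contra hinf
    obtain ⟨F, hF, hFcard⟩ := Set.Infinite.exists_subset_card_eq hinf (#T + 2)
    have := card_le F hF
    lia
  refine ⟨hS, ?_⟩
  rw [Set.ncard_eq_toFinset_card S hS]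
  exact card_le _ hS.coe_toFinset.subset

theorem tendsto_sum_atBot {X ι G : Type*} [AddCommGroup G] [PartialOrder G] [IsOrderedAddMonoid G]
    {l : Filter X} {s : Finset ι} {f : ι → X → G} {i : ι} (hi : i ∈ s)
    (hbot : Tendsto (f i) l atBot) (hbdd : ∀ j ∈ s, l.IsBoundedUnder (· ≤ ·) (f j)) :
    Tendsto (fun x ↦ ∑ j ∈ s, f j x) l atBot := by
  classical
  obtain ⟨C, hC⟩ := isBoundedUnder_le_sum (s.erase i) fun j hj ↦ hbdd j (mem_of_mem_erase hj)
  have hC' : ∀ᶠ x in l, (∑ j ∈ s.erase i, f j) x ≤ C := eventually_map.1 hC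
  refine (tendsto_atBot_add_right_of_ge' l C hbot hC').congr fun x ↦ ?_
  rw [Finset.sum_apply, add_sum_erase s (fun j ↦ f j x) hi]

theorem exists_mem_Ioo_eq_zero_of_tendsto {f : ℝ → ℝ} {p q : ℝ} (hpq : p < q)
    (hf : ContinuousOn f (Set.Ioo p q)) (hp : Tendsto f (𝓝[>] p) atBot)
    (hq : Tendsto f (𝓝[<] q) atTop) : ∃ z ∈ Set.Ioo p q, f z = 0 :=
  hf.surjOn_of_tendsto (Set.nonempty_Ioo.2 hpq) ((tendsto_comp_coe_Ioo_atBot hpq).2 hp)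
    ((tendsto_comp_coe_Ioo_atTop hpq).2 hq) (Set.mem_univ 0)

theorem abs_cos_lt_one_of_sin_ne_zero_s10 {θ : ℝ} (hθ : sin θ ≠ 0) : |cos θ| < 1 :=
  (abs_cos_le_one θ).lt_of_ne fun h ↦ hθ (sin_eq_zero_iff.2 (abs_cos_eq_one_iff.1 h))

theorem abs_cos_nat_mul_pi_div_lt_one {m n : ℕ} (hn : n ≠ 0) (h : ¬ n ∣ m) :
    |cos (m * π / n)| < 1 := by
  refine abs_cos_lt_one_of_sin_ne_zero_s10 fun hsin ↦ h ?_
  obtain ⟨k, hk⟩ := sin_eq_zero_iff.1 hsin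
  have hkn : (k * n : ℝ) = m := by
    field_simp at hk
    exact hk
  exact Int.natCast_dvd_natCast.1 (Dvd.intro_left k (by exact_mod_cast hkn))

theorem not_irrational_div_of_sin_mul_eq_zero {k x y : ℝ} (hk : k ≠ 0) (hx : sin (k * x) = 0)
    (hy : sin (k * y) = 0) : ¬ Irrational (x / y) := by
  obtain ⟨m, hm⟩ := sin_eq_zero_iff.1 hx
  obtain ⟨m', hm'⟩ := sin_eq_zero_iff.1 hy
  have hxy : x / y = ((m / m' : ℚ) : ℝ) := by
    rw [← mul_div_mul_left x y hk, ← hm, ← hm', mul_div_mul_right _ _ pi_ne_zero]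
    push_cast
    rfl
  exact hxy ▸ Rat.not_irrational _

theorem tendsto_sin_nhdsGT_zero : Tendsto sin (𝓝[>] 0) (𝓝[>] 0) := by
  refine tendsto_nhdsWithin_iff.2 ⟨?_, ?_⟩
  · simpa only [sin_zero] using (continuous_sin.tendsto 0).mono_left nhdsWithin_le_nhds
  · filter_upwards [Ioo_mem_nhdsGT pi_pos] with θ hθ using sin_pos_of_mem_Ioo hθ

theorem abs_card_Ioo_floor_ceil_sub_le_one {x y : ℝ} (hxy : x ≤ y) :
    |(#(Ioo ⌊x⌋ ⌈y⌉) : ℝ) - (y - x)| ≤ 1 := by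
  have hx := Int.floor_le x
  have hx' := Int.lt_floor_add_one x
  have hy := Int.le_ceil y
  have hy' := Int.ceil_lt_add_one y
  have hcard : (#(Ioo ⌊x⌋ ⌈y⌉) : ℝ) = max ((⌈y⌉ : ℝ) - ⌊x⌋ - 1) 0 := by
    rw [Int.card_Ioo, ← Int.cast_natCast, Int.toNat_eq_max]
    push_cast
    rfl
  rw [hcard, abs_le]
  constructor
  · linarith [le_max_left ((⌈y⌉ : ℝ) - ⌊x⌋ - 1) 0]
  · rw [sub_le_iff_le_add]
    exact max_le (by linarith) (by linarith)

/-- The function `θ ↦ c * csc θ - cot θ`, whose rescalings `k ↦ c * csc (k * ℓ) - cot (k * ℓ)` are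
the summands of `p_j / 2`. It is `0` at the zeros of `sin`, which are excluded from every count. -/
noncomputable def cscSubCot (c θ : ℝ) : ℝ :=
  (c - cos θ) / sin θ

section cscSubCot

variable {c θ : ℝ}

theorem cscSubCot_neg (c θ : ℝ) : cscSubCot c (-θ) = -cscSubCot c θ := by
  rw [cscSubCot, cos_neg, sin_neg, div_neg, cscSubCot]

theorem cscSubCot_add_of_sin_eq_zero (c : ℝ) (hθ : sin θ = 0) (t : ℝ) :
    cscSubCot c (θ + t) = cscSubCot (c * cos θ) t := by
  simp only [cscSubCot, sin_add, cos_add, hθ, zero_mul, zero_add, sub_zero]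
  rcases sin_eq_zero_iff_cos_eq.1 hθ with h | h
  · simp only [h, one_mul, mul_one]
  · rw [h, neg_one_mul, neg_one_mul, mul_neg_one, ← neg_div_neg_eq, neg_neg, neg_sub', neg_neg]

theorem hasDerivAt_cscSubCot (c : ℝ) (hθ : sin θ ≠ 0) :
    HasDerivAt (cscSubCot c) ((1 - c * cos θ) / sin θ ^ 2) θ := by
  refine (((hasDerivAt_cos θ).const_sub c).div (hasDerivAt_sin θ) hθ).congr_deriv ?_
  congr 1
  linear_combination sin_sq_add_cos_sq θ

theorem strictMonoOn_cscSubCot (hc : |c| ≤ 1) {s : Set ℝ} (hs : Convex ℝ s)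
    (hsin : ∀ θ ∈ s, sin θ ≠ 0) : StrictMonoOn (cscSubCot c) s := by
  refine strictMonoOn_of_deriv_pos hs
    (fun θ hθ ↦ (hasDerivAt_cscSubCot c (hsin θ hθ)).continuousAt.continuousWithinAt)
    fun θ hθ ↦ ?_
  have hθ' : sin θ ≠ 0 := hsin θ (interior_subset hθ)
  have hlt : c * cos θ < 1 := (le_abs_self _).trans_lt <| by
    rw [abs_mul]
    exact mul_lt_one_of_nonneg_of_lt_one_right hc (abs_nonneg _)
      (abs_cos_lt_one_of_sin_ne_zero_s10 hθ')
  rw [(hasDerivAt_cscSubCot c hθ').deriv]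
  exact div_pos (sub_pos.2 hlt) (by positivity)

theorem tendsto_cscSubCot_nhdsGT_zero (hc : c < 1) : Tendsto (cscSubCot c) (𝓝[>] 0) atBot := by
  have hnum : Tendsto (fun θ ↦ c - cos θ) (𝓝[>] 0) (𝓝 (c - 1)) := by
    have hcont : Continuous fun θ ↦ c - cos θ := by fun_prop
    simpa only [cos_zero] using (hcont.tendsto 0).mono_left nhdsWithin_le_nhds
  exact hnum.neg_mul_atTop (sub_neg.2 hc)
    (tendsto_inv_nhdsGT_zero.comp tendsto_sin_nhdsGT_zero)

theorem tendsto_cscSubCot_nhdsGT (hc : |c| < 1) (hθ : sin θ = 0) :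
    Tendsto (cscSubCot c) (𝓝[>] θ) atBot := by
  have hlt : c * cos θ < 1 := (le_abs_self _).trans_lt <| by
    rw [abs_mul]
    exact mul_lt_one_of_nonneg_of_lt_one_left (abs_nonneg _) hc (abs_cos_le_one θ)
  have hsub : Tendsto (fun x ↦ x - θ) (𝓝[>] θ) (𝓝[>] 0) := by
    have := (continuous_sub_right θ).continuousWithinAt.tendsto_nhdsWithin (s := Set.Ioi θ)
      (t := Set.Ioi 0) (x := θ) fun x hx ↦ sub_pos.2 hx
    rwa [sub_self] at this
  refine ((tendsto_cscSubCot_nhdsGT_zero hlt).comp hsub).congr fun x ↦ ?_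
  rw [Function.comp_apply, ← cscSubCot_add_of_sin_eq_zero c hθ, add_sub_cancel]

theorem isBoundedUnder_le_cscSubCot_nhdsGT (hc : |c| < 1) (θ : ℝ) :
    (𝓝[>] θ).IsBoundedUnder (· ≤ ·) (cscSubCot c) := by
  by_cases hθ : sin θ = 0
  · exact (tendsto_cscSubCot_nhdsGT hc hθ).isBoundedUnder_le_atBot
  · exact ((hasDerivAt_cscSubCot c hθ).continuousAt.tendsto.mono_left
      nhdsWithin_le_nhds).isBoundedUnder_le

end cscSubCot

section sinZeros

variable {l α β x : ℝ}

/-- The zeros of `k ↦ sin (k * l)` in `(α, β)`, for `l > 0`: the poles there of the function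
`k ↦ cscSubCot c (k * l)` when `|c| < 1`. -/
noncomputable def sinZeros (l α β : ℝ) : Finset ℝ :=
  (Ioo ⌊α * l / π⌋ ⌈β * l / π⌉).image fun m : ℤ ↦ m * π / l

theorem mem_sinZeros (hl : 0 < l) :
    x ∈ sinZeros l α β ↔ x ∈ Set.Ioo α β ∧ sin (x * l) = 0 := by
  have hmem (m : ℤ) : m ∈ Ioo ⌊α * l / π⌋ ⌈β * l / π⌉ ↔ m * π / l ∈ Set.Ioo α β := by
    rw [Finset.mem_Ioo, Int.floor_lt, Int.lt_ceil, Set.mem_Ioo, div_lt_iff₀ pi_pos,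
      lt_div_iff₀ pi_pos, lt_div_iff₀ hl, div_lt_iff₀ hl]
  simp only [sinZeros, mem_image, hmem, sin_eq_zero_iff, ← div_eq_iff hl.ne']
  constructor
  · rintro ⟨m, hm, rfl⟩
    exact ⟨hm, m, rfl⟩
  · rintro ⟨hx, m, rfl⟩
    exact ⟨m, hx, rfl⟩

theorem abs_card_sinZeros_sub_le_one (hl : 0 < l) (hαβ : α ≤ β) :
    |(#(sinZeros l α β) : ℝ) - (β - α) * l / π| ≤ 1 := by
  have hinj : Function.Injective fun m : ℤ ↦ m * π / l := fun m m' h ↦ by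
    field_simp at h
    exact_mod_cast h
  rw [sinZeros, card_image_of_injective _ hinj, sub_mul, sub_div]
  exact abs_card_Ioo_floor_ceil_sub_le_one (by gcongr)

end sinZeros

section secularSum

variable {ι : Type*} [Fintype ι] {c ℓ : ι → ℝ} {α β p x y : ℝ}

/-- The function `∑_h [c_h csc (k ℓ_h) - cot (k ℓ_h)]` of `k`, which is `p_j / 2` when
`c_h = cos (2πja_h / n)`. -/
noncomputable def secularSum (c ℓ : ι → ℝ) (k : ℝ) : ℝ :=
  ∑ h, cscSubCot (c h) (k * ℓ h)

theorem secularSum_neg (c ℓ : ι → ℝ) (k : ℝ) : secularSum c ℓ (-k) = -secularSum c ℓ k := by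
  simp only [secularSum, neg_mul, cscSubCot_neg, sum_neg_distrib]

theorem continuousAt_secularSum (c : ι → ℝ) {k : ℝ} (hk : ∀ h, sin (k * ℓ h) ≠ 0) :
    ContinuousAt (secularSum c ℓ) k :=
  tendsto_finsetSum _ fun h _ ↦
    (hasDerivAt_cscSubCot (c h) (hk h)).continuousAt.comp (f := (· * ℓ h))
      (continuous_mul_const (ℓ h)).continuousAt

theorem strictMonoOn_secularSum [Nonempty ι] (hc : ∀ h, |c h| ≤ 1) (hℓ : ∀ h, 0 < ℓ h) {s : Set ℝ}
    (hs : Convex ℝ s) (hsin : ∀ k ∈ s, ∀ h, sin (k * ℓ h) ≠ 0) :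
    StrictMonoOn (secularSum c ℓ) s := by
  intro x hx y hy hxy
  refine sum_lt_sum_of_nonempty univ_nonempty fun h _ ↦ ?_
  have hconvex : Convex ℝ ((· * ℓ h) '' s) := hs.linear_image (LinearMap.mulRight ℝ (ℓ h))
  exact strictMonoOn_cscSubCot (hc h) hconvex (Set.forall_mem_image.2 fun k hk ↦ hsin k hk h)
    (Set.mem_image_of_mem _ hx) (Set.mem_image_of_mem _ hy) (mul_lt_mul_of_pos_right hxy (hℓ h))

theorem tendsto_secularSum_nhdsGT (hc : ∀ h, |c h| < 1) (hℓ : ∀ h, 0 < ℓ h)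
    (hp : ∃ h, sin (p * ℓ h) = 0) : Tendsto (secularSum c ℓ) (𝓝[>] p) atBot := by
  obtain ⟨i, hi⟩ := hp
  have hmul (h : ι) : Tendsto (· * ℓ h) (𝓝[>] p) (𝓝[>] (p * ℓ h)) :=
    (continuous_mul_const (ℓ h)).continuousWithinAt.tendsto_nhdsWithin fun _ hk ↦
      mul_lt_mul_of_pos_right hk (hℓ h)
  exact tendsto_sum_atBot (mem_univ i) ((tendsto_cscSubCot_nhdsGT (hc i) hi).comp (hmul i))
    fun h _ ↦ (hmul h).isBoundedUnder_comp (isBoundedUnder_le_cscSubCot_nhdsGT (hc h) (p * ℓ h))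

theorem tendsto_secularSum_nhdsLT (hc : ∀ h, |c h| < 1) (hℓ : ∀ h, 0 < ℓ h)
    (hp : ∃ h, sin (p * ℓ h) = 0) : Tendsto (secularSum c ℓ) (𝓝[<] p) atTop := by
  have hp' : ∃ h, sin (-p * ℓ h) = 0 := by simpa only [neg_mul, sin_neg, neg_eq_zero] using hp
  refine (tendsto_neg_atBot_atTop.comp
    ((tendsto_secularSum_nhdsGT hc hℓ hp').comp tendsto_neg_nhdsLT)).congr fun k ↦ ?_
  simp only [Function.comp_apply, secularSum_neg, neg_neg]

/-- The points of `(α, β)` at which some term of `secularSum c ℓ` has a pole, each counted once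
even if it is a pole of several terms. -/
noncomputable def poles (ℓ : ι → ℝ) (α β : ℝ) : Finset ℝ :=
  univ.biUnion fun h ↦ sinZeros (ℓ h) α β

theorem mem_poles (hℓ : ∀ h, 0 < ℓ h) :
    x ∈ poles ℓ α β ↔ x ∈ Set.Ioo α β ∧ ∃ h, sin (x * ℓ h) = 0 := by
  simp only [poles, mem_biUnion, mem_univ, true_and, mem_sinZeros (hℓ _), exists_and_left]

theorem abs_card_poles_sub_le (hℓ : ∀ h, 0 < ℓ h)
    (hirr : Pairwise fun h h' ↦ Irrational (ℓ h / ℓ h')) (h0 : 0 ∉ Set.Ioo α β) (hαβ : α ≤ β) :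
    |(#(poles ℓ α β) : ℝ) - (β - α) * (∑ h, ℓ h) / π| ≤ Fintype.card ι := by
  have hdisj : Pairwise fun h h' ↦ Disjoint (sinZeros (ℓ h) α β) (sinZeros (ℓ h') α β) := by
    refine fun h h' hne ↦ disjoint_left.2 fun k hk hk' ↦ ?_
    obtain ⟨hkI, hsin⟩ := (mem_sinZeros (hℓ h)).1 hk
    obtain ⟨-, hsin'⟩ := (mem_sinZeros (hℓ h')).1 hk'
    exact not_irrational_div_of_sin_mul_eq_zero (ne_of_mem_of_not_mem hkI h0) hsin hsin' (hirr hne)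
  rw [poles, card_biUnion fun h _ h' _ hne ↦ hdisj hne, Nat.cast_sum, mul_sum, sum_div,
    ← sum_sub_distrib]
  calc |∑ h, ((#(sinZeros (ℓ h) α β) : ℝ) - (β - α) * ℓ h / π)|
      ≤ ∑ h, |(#(sinZeros (ℓ h) α β) : ℝ) - (β - α) * ℓ h / π| := abs_sum_le_sum_abs _ _
    _ ≤ ∑ _h : ι, (1 : ℝ) := sum_le_sum fun h _ ↦ abs_card_sinZeros_sub_le_one (hℓ h) hαβ
    _ = Fintype.card ι := by rw [sum_const, card_univ, nsmul_one]

/-- The zeros of `secularSum c ℓ` in `(α, β)` other than the points where some term is undefined,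
counted by the paper's `N_j`. -/
def secularZeros (c ℓ : ι → ℝ) (α β : ℝ) : Set ℝ :=
  {k | k ∈ Set.Ioo α β ∧ (∀ h, sin (k * ℓ h) ≠ 0) ∧ secularSum c ℓ k = 0}

theorem exists_mem_poles_of_mem_secularZeros [Nonempty ι] (hc : ∀ h, |c h| ≤ 1)
    (hℓ : ∀ h, 0 < ℓ h) (hx : x ∈ secularZeros c ℓ α β) (hy : y ∈ secularZeros c ℓ α β)
    (hxy : x < y) : ∃ p ∈ poles ℓ α β, x < p ∧ p < y := by
  obtain ⟨hxI, hxsin, hx0⟩ := hx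
  obtain ⟨hyI, hysin, hy0⟩ := hy
  by_contra! hnone
  have hsin : ∀ k ∈ Set.Icc x y, ∀ h, sin (k * ℓ h) ≠ 0 := by
    intro k hk h hkh
    have hxk : x < k := hk.1.lt_of_ne fun e ↦ hxsin h (e ▸ hkh)
    have hky : k < y := hk.2.lt_of_ne fun e ↦ hysin h (e ▸ hkh)
    have hkP : k ∈ poles ℓ α β := (mem_poles hℓ).2 ⟨⟨hxI.1.trans hxk, hky.trans hyI.2⟩, h, hkh⟩
    exact (hnone k hkP hxk).not_gt hky
  have hlt : secularSum c ℓ x < secularSum c ℓ y :=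
    strictMonoOn_secularSum hc hℓ (convex_Icc x y) hsin (Set.left_mem_Icc.2 hxy.le)
      (Set.right_mem_Icc.2 hxy.le) hxy
  exact hlt.ne (hx0.trans hy0.symm)

theorem exists_mem_secularZeros_of_mem_poles (hc : ∀ h, |c h| < 1) (hℓ : ∀ h, 0 < ℓ h)
    (hx : x ∈ poles ℓ α β) (hy : y ∈ poles ℓ α β) (hxy : x < y)
    (hconsec : ∀ p ∈ poles ℓ α β, p ∉ Set.Ioo x y) :
    ∃ z ∈ secularZeros c ℓ α β, x < z ∧ z < y := by
  obtain ⟨hxI, hxsin⟩ := (mem_poles hℓ).1 hx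
  obtain ⟨hyI, hysin⟩ := (mem_poles hℓ).1 hy
  have hI : Set.Ioo x y ⊆ Set.Ioo α β := Set.Ioo_subset_Ioo hxI.1.le hyI.2.le
  have hsin (k : ℝ) (hk : k ∈ Set.Ioo x y) (h : ι) : sin (k * ℓ h) ≠ 0 :=
    fun hkh ↦ hconsec k ((mem_poles hℓ).2 ⟨hI hk, h, hkh⟩) hk
  obtain ⟨z, hz, hz0⟩ := exists_mem_Ioo_eq_zero_of_tendsto hxy
    (fun k hk ↦ (continuousAt_secularSum c (hsin k hk)).continuousWithinAt)
    (tendsto_secularSum_nhdsGT hc hℓ hxsin) (tendsto_secularSum_nhdsLT hc hℓ hysin)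
  exact ⟨z, ⟨hI hz, hsin z hz, hz0⟩, hz⟩

theorem finite_secularZeros_and_ncard_le [Nonempty ι] (hc : ∀ h, |c h| ≤ 1) (hℓ : ∀ h, 0 < ℓ h) :
    (secularZeros c ℓ α β).Finite ∧ (secularZeros c ℓ α β).ncard ≤ #(poles ℓ α β) + 1 :=
  finite_and_ncard_le_of_interleaved fun _ hx _ hy hxy ↦
    exists_mem_poles_of_mem_secularZeros hc hℓ hx hy hxy

theorem card_poles_le_ncard_secularZeros_add_one (hc : ∀ h, |c h| < 1) (hℓ : ∀ h, 0 < ℓ h)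
    (hfin : (secularZeros c ℓ α β).Finite) :
    #(poles ℓ α β) ≤ (secularZeros c ℓ α β).ncard + 1 := by
  rw [Set.ncard_eq_toFinset_card _ hfin]
  refine card_le_of_interleaved fun x hx y hy hxy hconsec ↦ ?_
  simpa only [hfin.mem_toFinset] using exists_mem_secularZeros_of_mem_poles hc hℓ hx hy hxy hconsec

theorem pj_zero_count_general [Nonempty ι] (hc : ∀ h, |c h| < 1) (hℓ : ∀ h, 0 < ℓ h)
    (hirr : Pairwise fun h h' ↦ Irrational (ℓ h / ℓ h')) (h0 : 0 ∉ Set.Ioo α β) (hαβ : α ≤ β) :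
    (secularZeros c ℓ α β).Finite ∧
      |((secularZeros c ℓ α β).ncard : ℝ) - (β - α) * (∑ h, ℓ h) / π| ≤ Fintype.card ι + 1 := by
  obtain ⟨hfin, hupper⟩ := finite_secularZeros_and_ncard_le (α := α) (β := β) (fun h ↦ (hc h).le) hℓ
  have hlower := card_poles_le_ncard_secularZeros_add_one hc hℓ hfin
  have hpoles := abs_le.1 (abs_card_poles_sub_le hℓ hirr h0 hαβ)
  rify at hupper hlower
  refine ⟨hfin, abs_le.2 ⟨?_, ?_⟩⟩ <;> linarith [hpoles.1, hpoles.2]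

end secularSum

/-- Weyl-type bounds for the number `N_j(a,b)` of zeros of
`p_j(k) = 2 ∑_h [cos(2πja_h/n) csc(k ℓ_h) - cot(k ℓ_h)]` in `(a,b)`, for
incommensurate symmetric edge lengths and a representation index `j` with
`1 ≤ j ≤ ⌊(n-1)/2⌋` such that `n ∤ 2 j a_h` for all `h`:
`(b-a)(∑_h ℓ_h)/π - d - 1 ≤ N_j(a,b) ≤ (b-a)(∑_h ℓ_h)/π + d + 1`. -/
theorem pj_zero_count (n d : ℕ) (a : Fin d → ℕ) (hd : 1 ≤ d)
    (hpos : ∀ h, 0 < a h) (hmono : StrictMono a) (hlt : ∀ h, 2 * a h < n)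
    (ℓ : Fin d → ℝ) (hℓ : ∀ h, 0 < ℓ h)
    (hirr : ∀ h h', h ≠ h' → Irrational (ℓ h / ℓ h'))
    (j : ℕ) (hj1 : 1 ≤ j) (hj2 : j ≤ (n - 1) / 2)
    (hjn : ∀ h, ¬ (n ∣ 2 * j * a h))
    (α β : ℝ) (hα : 0 ≤ α) (hαβ : α < β) (Z : Set ℝ)
    (hZ : Z = {k : ℝ | k ∈ Set.Ioo α β ∧
      (∀ h, Real.sin (k * ℓ h) ≠ 0) ∧
      ∑ h : Fin d, (Real.cos (2 * Real.pi * j * a h / n) * (1 / Real.sin (k * ℓ h))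
        - Real.cos (k * ℓ h) / Real.sin (k * ℓ h)) = 0}) :
    Z.Finite ∧
    (β - α) * (∑ h : Fin d, ℓ h) / Real.pi - d - 1 ≤ (Z.ncard : ℝ) ∧
    (Z.ncard : ℝ) ≤ (β - α) * (∑ h : Fin d, ℓ h) / Real.pi + d + 1 := by
  have : Nonempty (Fin d) := ⟨⟨0, hd⟩⟩
  have hcos (h : Fin d) : |Real.cos (2 * Real.pi * j * a h / n)| < 1 := by
    have hangle : 2 * Real.pi * j * a h = (2 * j * a h : ℕ) * Real.pi := by push_cast; ring
    rw [hangle]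
    exact abs_cos_nat_mul_pi_div_lt_one (Nat.ne_zero_of_lt (hlt h)) (hjn h)
  have hZ' : Z = secularZeros (fun h ↦ Real.cos (2 * Real.pi * j * a h / n)) ℓ α β := by
    simp only [hZ, mul_one_div, ← sub_div]
    rfl
  obtain ⟨hfin, hcount⟩ := pj_zero_count_general hcos hℓ (fun h h' ↦ hirr h h')
    (fun h0 ↦ hα.not_gt h0.1) hαβ.le
  rw [← hZ', Fintype.card_fin, abs_le] at hcount
  exact ⟨hZ' ▸ hfin, by linarith [hcount.1], by linarith [hcount.2]⟩
end

section
/- Let θ ∈ ℝ and let k ∈ ℝ with k not an integer multiple of π. Then the family of terms ((−1)^m cos θ − 1)·(1/(k+πm) − mπ/(1+m²π²)), indexed by m ∈ ℤ, is absolutely summable, and ∑_{m∈ℤ} ((−1)^m cos θ − 1)·(1/(k+πm) − mπ/(1+m²π²)) = cos θ · csc k − cot k. -/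
/-!
The poles of `cot z - cot w`, as a function of `z`, give the absolutely convergent expansion
`∑ m, (1 / (z + π m) - 1 / (w + π m)) = cot z - cot w`. Its even-indexed terms are half the terms
of the same expansion at `z / 2` and `w / 2`, so `cot (z / 2) - cot z = csc z` turns it into the
alternating expansion of `csc z - csc w`. Averaging the combination of the two over `w` and `-w`
removes the contribution of `w`, because `csc` and `cot` are odd, and replaces `1 / (w + π m)` by
`π m / ((π m) ^ 2 - w ^ 2)`; the regularizing term of the theorem is the case `w = I`.
-/

open Complex
open scoped Real

lemma summable_one_div_add_intCast_sub_one_div {x y : ℂ} (hx : x ∈ integerComplement)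
    (hy : y ∈ integerComplement) :
    Summable fun m : ℤ ↦ 1 / (x + m) - 1 / (y + m) := by
  have isBigO_inv (u : ℂ) := EisensteinSeries.linear_inv_isBigO_right 1 u
  have summable_inv_mul : Summable fun m : ℤ ↦ ((x + m) * (y + m))⁻¹ := by
    refine EisensteinSeries.summable_inv_of_isBigO_rpow_inv one_lt_two ?_
    simpa [pow_two] using (isBigO_inv y).mul (isBigO_inv x)
  refine (summable_inv_mul.mul_left (y - x)).congr fun m ↦ ?_
  have hxm := integerComplement_add_ne_zero hx m
  have hym := integerComplement_add_ne_zero hy m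
  field_simp
  ring

lemma hasSum_one_div_add_intCast_sub_one_div {x y : ℂ} (hx : x ∈ integerComplement)
    (hy : y ∈ integerComplement) :
    HasSum (fun m : ℤ ↦ 1 / (x + m) - 1 / (y + m)) (π * cot (π * x) - π * cot (π * y)) := by
  have hasSum_cotTerm {u : ℂ} (hu : u ∈ integerComplement) :
      HasSum (cotTerm u) (π * cot (π * u) - 1 / u) := by
    rw [cot_series_rep' hu]
    exact (summable_cotTerm hu).hasSum
  have hsum := summable_one_div_add_intCast_sub_one_div hx hy
  have symmetric_sum := (hasSum_nat_add_iff' 1).mpr hsum.hasSum.nat_add_neg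
  have tsum_sub_zero_term := symmetric_sum.unique <|
    ((hasSum_cotTerm hx).sub (hasSum_cotTerm hy)).congr_fun fun n ↦ by
      simp only [cotTerm]; push_cast; ring
  simp only [Finset.sum_range_one, Nat.cast_zero, Int.cast_zero, neg_zero, add_zero]
    at tsum_sub_zero_term
  rw [hsum.hasSum_iff]
  linear_combination tsum_sub_zero_term

lemma div_pi_mem_integerComplement {z : ℂ} (hz : sin z ≠ 0) : z / π ∈ integerComplement := by
  rintro ⟨m, hm⟩
  refine sin_ne_zero_iff.mp hz m ?_
  rw [hm, div_mul_cancel₀ z (ofReal_ne_zero.mpr Real.pi_ne_zero)]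

lemma hasSum_one_div_add_pi_mul_sub_one_div {z w : ℂ} (hz : sin z ≠ 0) (hw : sin w ≠ 0) :
    HasSum (fun m : ℤ ↦ 1 / (z + π * m) - 1 / (w + π * m)) (cot z - cot w) := by
  have pi_ne_zero : (π : ℂ) ≠ 0 := ofReal_ne_zero.mpr Real.pi_ne_zero
  have rescale (u : ℂ) (m : ℤ) : (π : ℂ)⁻¹ * (1 / (u / π + m)) = 1 / (u + π * m) := by
    rw [one_div, one_div, ← mul_inv, mul_add, mul_div_cancel₀ u pi_ne_zero]
  have normalized := (hasSum_one_div_add_intCast_sub_one_div (div_pi_mem_integerComplement hz)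
    (div_pi_mem_integerComplement hw)).mul_left (π : ℂ)⁻¹
  simpa only [mul_sub, rescale, mul_div_cancel₀ _ pi_ne_zero, inv_mul_cancel_left₀ pi_ne_zero]
    using normalized

lemma hasSum_neg_one_zpow_mul {R : Type*} [DivisionRing R] [TopologicalSpace R]
    [IsTopologicalRing R] {f : ℤ → R} {a b : R} (hf : HasSum f a)
    (hf_even : HasSum (fun n ↦ f (2 * n)) b) :
    HasSum (fun m ↦ (-1) ^ m * f m) (2 * b - a) := by
  have hinj : Function.Injective fun n : ℤ ↦ 2 * n := mul_right_injective₀ two_ne_zero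
  have even_part : HasSum ({m | Even m}.indicator f) b := by
    rw [← range_two_mul]
    exact hasSum_subtype_iff_indicator.mp (hinj.hasSum_range_iff.mpr hf_even)
  refine ((even_part.mul_left 2).sub hf).congr_fun fun m ↦ ?_
  rcases Int.even_or_odd m with hm | hm
  · simp [hm, hm.neg_one_zpow, two_mul]
  · simp [hm.neg_one_zpow, Int.not_even_iff_odd.mpr hm]

lemma sin_half_ne_zero {z : ℂ} (hz : sin z ≠ 0) : sin (z / 2) ≠ 0 := by
  intro h
  apply hz
  rw [← mul_div_cancel₀ z two_ne_zero, sin_two_mul, h, mul_zero, zero_mul]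

lemma cot_half_sub_cot {z : ℂ} (hz : sin z ≠ 0) : cot (z / 2) - cot z = 1 / sin z := by
  have hz_half := sin_half_ne_zero hz
  have sin_sub_half := sin_sub z (z / 2)
  rw [sub_half] at sin_sub_half
  rw [cot_eq_cos_div_sin, cot_eq_cos_div_sin]
  field_simp
  linear_combination -sin_sub_half

lemma hasSum_neg_one_zpow_mul_one_div_add_pi_mul_sub_one_div {z w : ℂ} (hz : sin z ≠ 0)
    (hw : sin w ≠ 0) :
    HasSum (fun m : ℤ ↦ (-1) ^ m * (1 / (z + π * m) - 1 / (w + π * m)))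
      (1 / sin z - 1 / sin w) := by
  have even_term (u : ℂ) (n : ℤ) :
      1 / (u + π * (2 * n : ℤ)) = 2⁻¹ * (1 / (u / 2 + π * n)) := by
    rw [one_div, one_div, ← mul_inv]
    push_cast
    ring
  have hasSum_even := (hasSum_one_div_add_pi_mul_sub_one_div (sin_half_ne_zero hz)
    (sin_half_ne_zero hw)).mul_left 2⁻¹
  simp only [mul_sub, ← even_term] at hasSum_even
  have csc_sub_csc : 1 / sin z - 1 / sin w =
      2 * (2⁻¹ * cot (z / 2) - 2⁻¹ * cot (w / 2)) - (cot z - cot w) := by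
    linear_combination -cot_half_sub_cot hz + cot_half_sub_cot hw
  rw [csc_sub_csc]
  exact hasSum_neg_one_zpow_mul (hasSum_one_div_add_pi_mul_sub_one_div hz hw) hasSum_even

lemma add_pi_mul_ne_zero {z : ℂ} (hz : sin z ≠ 0) (m : ℤ) : z + π * m ≠ 0 := fun h ↦
  sin_ne_zero_iff.mp hz (-m) <| by push_cast; linear_combination h

lemma pi_mul_div_sq_sub_sq {w : ℂ} (hw : sin w ≠ 0) (m : ℤ) :
    m * π / (m ^ 2 * π ^ 2 - w ^ 2) = 2⁻¹ * (1 / (w + π * m) + 1 / (-w + π * m)) := by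
  have hw_neg : sin (-w) ≠ 0 := by rwa [sin_neg, neg_ne_zero]
  have factorization : (m ^ 2 * π ^ 2 - w ^ 2 : ℂ) = (w + π * m) * (-w + π * m) := by ring
  rw [factorization, one_div_add_one_div (add_pi_mul_ne_zero hw m) (add_pi_mul_ne_zero hw_neg m)]
  ring

theorem pole_expansion_general (a : ℂ) {z w : ℂ} (hz : sin z ≠ 0) (hw : sin w ≠ 0) :
    HasSum (fun m : ℤ ↦ ((-1) ^ m * a - 1) *
      (1 / (z + π * m) - m * π / (m ^ 2 * π ^ 2 - w ^ 2))) (a * (1 / sin z) - cos z / sin z) := by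
  have difference {v : ℂ} (hv : sin v ≠ 0) :
      HasSum (fun m : ℤ ↦ ((-1) ^ m * a - 1) * (1 / (z + π * m) - 1 / (v + π * m)))
        (a * (1 / sin z - 1 / sin v) - (cot z - cot v)) :=
    (((hasSum_neg_one_zpow_mul_one_div_add_pi_mul_sub_one_div hz hv).mul_left a).sub
      (hasSum_one_div_add_pi_mul_sub_one_div hz hv)).congr_fun fun m ↦ by ring
  have hw_neg : sin (-w) ≠ 0 := by rwa [sin_neg, neg_ne_zero]
  have average := ((difference hw).add (difference hw_neg)).mul_left 2⁻¹
  have value : a * (1 / sin z) - cos z / sin z =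
      2⁻¹ * (a * (1 / sin z - 1 / sin w) - (cot z - cot w) +
        (a * (1 / sin z - 1 / sin (-w)) - (cot z - cot (-w)))) := by
    simp only [cot_eq_cos_div_sin, sin_neg, cos_neg]
    ring
  rw [value]
  refine average.congr_fun fun m ↦ ?_
  rw [pi_mul_div_sq_sub_sq hw]
  ring

/-- Pole expansion: for `k` not an integer multiple of `π`, the family
`((-1)^m cos θ - 1)(1/(k + πm) - mπ/(1 + m²π²))`, `m ∈ ℤ`, is (absolutely)
summable with sum `cos θ csc k - cot k`. -/
theorem pole_expansion (θ k : ℝ) (hk : ∀ m : ℤ, k ≠ m * Real.pi) :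
    Summable (fun m : ℤ => ((-1 : ℝ) ^ m * Real.cos θ - 1) *
      (1 / (k + Real.pi * m) - m * Real.pi / (1 + (m : ℝ) ^ 2 * Real.pi ^ 2))) ∧
    ∑' m : ℤ, ((-1 : ℝ) ^ m * Real.cos θ - 1) *
        (1 / (k + Real.pi * m) - m * Real.pi / (1 + (m : ℝ) ^ 2 * Real.pi ^ 2)) =
      Real.cos θ * (1 / Real.sin k) - Real.cos k / Real.sin k := by
  have hsin_k : sin (k : ℂ) ≠ 0 := sin_ne_zero_iff.mpr fun m ↦ mod_cast hk m
  have hsin_I : sin I ≠ 0 := sin_ne_zero_iff.mpr fun m h ↦ by simpa using congr_arg im h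
  have hasSum_real : HasSum (fun m : ℤ ↦ ((-1 : ℝ) ^ m * Real.cos θ - 1) *
      (1 / (k + π * m) - m * π / (1 + (m : ℝ) ^ 2 * π ^ 2)))
      (Real.cos θ * (1 / Real.sin k) - Real.cos k / Real.sin k) := by
    rw [← hasSum_ofReal]
    push_cast
    simpa only [ofReal_cos, I_sq, sub_neg_eq_add, add_comm (1 : ℂ)] using
      pole_expansion_general (Real.cos θ) hsin_k hsin_I
  exact ⟨hasSum_real.summable, hasSum_real.tsum_eq⟩
end
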